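/- Let Ω ⊂ ℝⁿ be a bounded connected open set (no boundary regularity assumed) and d(x) := dist(x, ∂Ω) for x ∈ Ω. Assume b and σ are Lipschitz continuous in x uniformly in α with constant B (i.e. (reg22) with ω(r) = Br and (reg2) with β = 1); assume that every x̄ ∈ ∂Ω has an open neighborhood U and k > 0 such that conditions (d_subsol) and (sigma_perp) hold for EVERY α ∈ A; and assume F satisfies the Strong Minimum Principle in Ω. If v : Ω → ℝ is lower semicontinuous, is a viscosity supersolution of F[v]=0 in Ω, and satisfies liminf_{x→∂Ω} v(x)/(−log d(x)) ≥ 0, then v is constant. -/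

import Mathlib

open scoped InnerProductSpace Matrix
open Filter

noncomputable section

/-- The signed distance to the boundary of `Ω`:
`d(x) = dist(x, Ωᶜ) - dist(x, closure Ω)`. -/
def sdist {n : ℕ} (Ω : Set (EuclideanSpace ℝ (Fin n))) (x : EuclideanSpace ℝ (Fin n)) : ℝ :=
  Metric.infDist x Ωᶜ - Metric.infDist x (closure Ω)

/-- The distance to the topological boundary of `Ω`. -/
def bdist {n : ℕ} (Ω : Set (EuclideanSpace ℝ (Fin n))) (x : EuclideanSpace ℝ (Fin n)) : ℝ :=
  Metric.infDist x (frontier Ω)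

/-- The Frobenius (Euclidean) norm of a matrix. -/
def mnorm {n r : ℕ} (M : Matrix (Fin n) (Fin r) ℝ) : ℝ :=
  Real.sqrt (∑ i, ∑ j, M i j ^ 2)

/-- The quadratic form `v ↦ v ⬝ X v`. -/
def quadForm {n : ℕ} (X : Matrix (Fin n) (Fin n) ℝ) (v : EuclideanSpace ℝ (Fin n)) : ℝ :=
  ∑ i, ∑ j, X i j * v i * v j

/-- `Mᵀ v` as a vector in `ℝʳ` (used for `σ(x,α)ᵀ Dd(x)`). -/
def sigmaT {n r : ℕ} (M : Matrix (Fin n) (Fin r) ℝ) (v : EuclideanSpace ℝ (Fin n)) :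
    Fin r → ℝ :=
  Matrix.mulVec Mᵀ (fun i => v i)

/-- The second-order superjet of `u` at `x` relative to `S`. -/
def J2plus {n : ℕ} (S : Set (EuclideanSpace ℝ (Fin n))) (u : EuclideanSpace ℝ (Fin n) → ℝ)
    (x : EuclideanSpace ℝ (Fin n)) :
    Set (EuclideanSpace ℝ (Fin n) × Matrix (Fin n) (Fin n) ℝ) :=
  { pX | pX.2.IsSymm ∧ ∀ ε > (0 : ℝ), ∀ᶠ y in nhdsWithin x S,
      u y - u x - ⟪pX.1, y - x⟫_ℝ - (1 / 2) * quadForm pX.2 (y - x) ≤ ε * ‖y - x‖ ^ 2 }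

/-- The second-order subjet of `u` at `x` relative to `S`: `J^{2,-}u = -J^{2,+}(-u)`. -/
def J2minus {n : ℕ} (S : Set (EuclideanSpace ℝ (Fin n))) (u : EuclideanSpace ℝ (Fin n) → ℝ)
    (x : EuclideanSpace ℝ (Fin n)) :
    Set (EuclideanSpace ℝ (Fin n) × Matrix (Fin n) (Fin n) ℝ) :=
  { qZ | (-qZ.1, -qZ.2) ∈ J2plus S (fun y => -u y) x }

/-- The first-order superdifferential of `u` at `x` relative to `S`. -/
def D1plus {n : ℕ} (S : Set (EuclideanSpace ℝ (Fin n))) (u : EuclideanSpace ℝ (Fin n) → ℝ)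
    (x : EuclideanSpace ℝ (Fin n)) : Set (EuclideanSpace ℝ (Fin n)) :=
  { q | ∀ ε > (0 : ℝ), ∀ᶠ y in nhdsWithin x S, u y - u x - ⟪q, y - x⟫_ℝ ≤ ε * ‖y - x‖ }

/-- The Bellman operator `F(x,p,X) = sup_{α ∈ A} (-b(x,α)·p - tr(σσᵀ X))`. -/
def Fop {n m r : ℕ} (A : Set (Fin m → ℝ))
    (b : EuclideanSpace ℝ (Fin n) → (Fin m → ℝ) → EuclideanSpace ℝ (Fin n))
    (σ : EuclideanSpace ℝ (Fin n) → (Fin m → ℝ) → Matrix (Fin n) (Fin r) ℝ)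
    (x p : EuclideanSpace ℝ (Fin n)) (X : Matrix (Fin n) (Fin n) ℝ) : ℝ :=
  sSup ((fun α => -⟪b x α, p⟫_ℝ - Matrix.trace (σ x α * (σ x α)ᵀ * X)) '' A)

/-- The Hamiltonian `H(x,p,X) = sup_{α ∈ A} (-b(x,α)·p - tr(σσᵀ X) - l(x,α))`. -/
def Hop {n m r : ℕ} (A : Set (Fin m → ℝ))
    (b : EuclideanSpace ℝ (Fin n) → (Fin m → ℝ) → EuclideanSpace ℝ (Fin n))
    (σ : EuclideanSpace ℝ (Fin n) → (Fin m → ℝ) → Matrix (Fin n) (Fin r) ℝ)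
    (l : EuclideanSpace ℝ (Fin n) → (Fin m → ℝ) → ℝ)
    (x p : EuclideanSpace ℝ (Fin n)) (X : Matrix (Fin n) (Fin n) ℝ) : ℝ :=
  sSup ((fun α => -⟪b x α, p⟫_ℝ - Matrix.trace (σ x α * (σ x α)ᵀ * X) - l x α) '' A)

/-- The set of projections of `x` onto `∂Ω`. -/
def projSet {n : ℕ} (Ω : Set (EuclideanSpace ℝ (Fin n))) (x : EuclideanSpace ℝ (Fin n)) :
    Set (EuclideanSpace ℝ (Fin n)) :=
  { z | z ∈ frontier Ω ∧ dist x z = bdist Ω x }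

/-- The interior normal directions at a boundary point `z`. -/
def normalDirs {n : ℕ} (Ω : Set (EuclideanSpace ℝ (Fin n))) (z : EuclideanSpace ℝ (Fin n)) :
    Set (EuclideanSpace ℝ (Fin n)) :=
  { ν | ‖ν‖ = 1 ∧ ∃ x ∈ Ω, x = z + bdist Ω x • ν }

/-!
Near `∂Ω` the function `ε log d` is a strict subsolution: since `σᵀ` kills the normal
directions on `∂Ω` and is Lipschitz, `|σᵀ p| ≤ B d` for every superdifferential `p` of `d`, so the
singular term `tr(a p ⊗ p) / d²` stays bounded by `B²` while the drift of `d` contributes `-k / d`.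
Comparing `v` with `ε log d` on `{ρ ≤ d ≤ δ}`, where the growth condition controls `v` on `{d = ρ}`
for small `ρ`, and letting `ε → 0` gives `v ≥ min {v x | d x = δ}` on `{d ≤ δ}`. Hence `v` attains
its minimum on the compact set `{d ≥ δ}`, inside `Ω`, and the Strong Minimum Principle applies.

As `d` is merely semiconcave, comparison goes through the theorem on sums, with the test functions
supplied by the sup-convolution of the barrier. Truncating `log` along its tangent line makes
the barrier globally semiconcave, so that this sup-convolution is `C¹` and Rademacher's theorem
applies to its gradient.
-/

theorem continuous_of_le_add {E : Type*} [NormedAddCommGroup E] {L C : ℝ} {u : E → ℝ}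
    (hu : ∀ x y, u y ≤ u x + L * ‖y - x‖ + C / 2 * ‖y - x‖ ^ 2) :
    Continuous u := by
  refine continuous_iff_continuousAt.2 fun x => tendsto_iff_dist_tendsto_zero.2 ?_
  have hbound : Tendsto (fun y => L * ‖y - x‖ + C / 2 * ‖y - x‖ ^ 2) (nhds x) (nhds 0) := by
    have : ContinuousAt (fun y => L * ‖y - x‖ + C / 2 * ‖y - x‖ ^ 2) x := by fun_prop
    simpa [ContinuousAt] using this
  refine squeeze_zero (fun _ => dist_nonneg) (fun y => ?_) hbound
  have hyx := hu y x
  rw [norm_sub_rev x y] at hyx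
  rw [Real.dist_eq, abs_le]
  constructor <;> linarith [hu x y]

section ProximalSlopes

variable {E : Type*} [NormedAddCommGroup E] [InnerProductSpace ℝ E]

/-- The proximal superdifferential: the slopes at `x` of the paraboloids of opening `C` that lie
above `f` and touch it at `x`. For `C = 0` it consists of the `p` for which `x` maximises
`f - ⟪p, ·⟫`. -/
def proxSuperdiff (C : ℝ) (f : E → ℝ) (x : E) : Set E :=
  {a | ∀ y, f y ≤ f x + ⟪a, y - x⟫_ℝ + C / 2 * ‖y - x‖ ^ 2}

/-- The proximal subdifferential: the slopes at `x` of the paraboloids of opening `-C` that lie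
below `f` and touch it at `x`. -/
def proxSubdiff (C : ℝ) (f : E → ℝ) (x : E) : Set E :=
  {a | ∀ y, f x + ⟪a, y - x⟫_ℝ - C / 2 * ‖y - x‖ ^ 2 ≤ f y}

/-- `u` is `C`-semiconcave, with slopes bounded by `L`. -/
def SemiconcaveWith (L C : ℝ) (u : E → ℝ) : Prop :=
  ∀ x, ∃ a ∈ proxSuperdiff C u x, ‖a‖ ≤ L

/-- `u` is `C`-semiconvex, with slopes bounded by `L`. -/
def SemiconvexWith (L C : ℝ) (u : E → ℝ) : Prop :=
  ∀ x, ∃ a ∈ proxSubdiff C u x, ‖a‖ ≤ L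

variable {L C c c' : ℝ} {u f : E → ℝ} {x x' a p p' : E}

theorem SemiconcaveWith.nonneg (hu : SemiconcaveWith L C u) : 0 ≤ L :=
  let ⟨_, _, ha⟩ := hu 0
  (norm_nonneg _).trans ha

theorem SemiconvexWith.nonneg (hu : SemiconvexWith L C u) : 0 ≤ L :=
  let ⟨_, _, ha⟩ := hu 0
  (norm_nonneg _).trans ha

theorem SemiconcaveWith.mono (hu : SemiconcaveWith L C u) {C' : ℝ} (hC : C ≤ C') :
    SemiconcaveWith L C' u := fun x =>
  let ⟨a, ha, hL⟩ := hu x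
  ⟨a, fun y => (ha y).trans (by gcongr), hL⟩

theorem SemiconcaveWith.le_add (hu : SemiconcaveWith L C u) (x y : E) :
    u y ≤ u x + L * ‖y - x‖ + C / 2 * ‖y - x‖ ^ 2 := by
  obtain ⟨a, ha, hL⟩ := hu x
  have hay : ⟪a, y - x⟫_ℝ ≤ L * ‖y - x‖ :=
    (real_inner_le_norm a (y - x)).trans (by gcongr)
  linarith [ha y]

theorem SemiconvexWith.le_add (hu : SemiconvexWith L C u) (x y : E) :
    u y ≤ u x + L * ‖y - x‖ + C / 2 * ‖y - x‖ ^ 2 := by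
  obtain ⟨a, ha, hL⟩ := hu y
  have hax : -⟪a, x - y⟫_ℝ ≤ L * ‖y - x‖ := by
    rw [← inner_neg_right, neg_sub]
    exact (real_inner_le_norm a (y - x)).trans (by gcongr)
  have hxy := ha x
  rw [norm_sub_rev x y] at hxy
  linarith

theorem SemiconcaveWith.continuous (hu : SemiconcaveWith L C u) : Continuous u :=
  continuous_of_le_add hu.le_add

theorem SemiconvexWith.continuous (hu : SemiconvexWith L C u) : Continuous u :=
  continuous_of_le_add hu.le_add

theorem SemiconcaveWith.add_le_two_mul_midpoint (hu : SemiconcaveWith L C u) (y z : E) :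
    u y + u z ≤ 2 * u (midpoint ℝ y z) + C / 4 * ‖y - z‖ ^ 2 := by
  obtain ⟨a, ha, -⟩ := hu (midpoint ℝ y z)
  have hy := ha y
  have hz := ha z
  rw [left_sub_midpoint, invOf_eq_inv, norm_smul, mul_pow] at hy
  rw [right_sub_midpoint, invOf_eq_inv, norm_smul, mul_pow, ← neg_sub y z, smul_neg,
    inner_neg_right, norm_neg] at hz
  norm_num at hy hz
  linarith

theorem eq_zero_of_inner_le_mul_norm_sq (ha : ∀ h : E, ⟪a, h⟫_ℝ ≤ c * ‖h‖ ^ 2) : a = 0 := by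
  set t : ℝ := 1 / (|c| + 1) with ht
  have ht0 : 0 < t := by positivity
  have hct : c * t < 1 := by
    rw [ht, mul_one_div, div_lt_one (by positivity)]
    linarith [le_abs_self c]
  have hta := ha (t • a)
  rw [real_inner_smul_right, real_inner_self_eq_norm_sq, norm_smul, mul_pow, Real.norm_eq_abs,
    sq_abs] at hta
  have hsq : ‖a‖ ^ 2 * (1 - c * t) ≤ 0 := by
    refine nonpos_of_mul_nonpos_right (a := t) ?_ ht0
    linarith
  have hnorm : ‖a‖ ^ 2 = 0 :=
    le_antisymm (nonpos_of_mul_nonpos_left hsq (by linarith)) (sq_nonneg _)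
  simpa using hnorm

theorem eq_of_mem_proxSubdiff_of_mem_proxSuperdiff (ha : a ∈ proxSubdiff c f x)
    (hp : p ∈ proxSuperdiff c' f x) : a = p := by
  refine sub_eq_zero.1 (eq_zero_of_inner_le_mul_norm_sq (c := (c + c') / 2) fun h => ?_)
  have hlow := ha (x + h)
  have hupp := hp (x + h)
  rw [add_sub_cancel_left] at hlow hupp
  rw [inner_sub_left]
  linarith

theorem norm_sub_le_of_mem_proxSuperdiff_zero (hc : 0 < c) (hf : (proxSubdiff c f x).Nonempty)
    (hp : p ∈ proxSuperdiff 0 f x) (hp' : p' ∈ proxSuperdiff 0 f x') :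
    ‖p - p'‖ ≤ 2 * c * ‖x - x'‖ := by
  obtain ⟨a, ha⟩ := hf
  obtain rfl := eq_of_mem_proxSubdiff_of_mem_proxSuperdiff ha hp
  set t : ℝ := 1 / c with ht
  set z : E := x + t • (a - p') with hz
  have hzx : z - x = t • (a - p') := by rw [hz, add_sub_cancel_left]
  have hzx' : z - x' = t • (a - p') + (x - x') := by rw [hz]; abel
  have hlow := ha z
  have hupp := hp' z
  have hcross := hp x'
  rw [hzx', inner_add_right] at hupp
  rw [← neg_sub x x', inner_neg_right] at hcross
  rw [hzx, norm_smul, mul_pow, Real.norm_eq_abs, sq_abs] at hlow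
  have hself : ⟪a, t • (a - p')⟫_ℝ - ⟪p', t • (a - p')⟫_ℝ = t * ‖a - p'‖ ^ 2 := by
    rw [← inner_sub_left, real_inner_smul_right, real_inner_self_eq_norm_sq]
  have hcs : ⟪p', x - x'⟫_ℝ - ⟪a, x - x'⟫_ℝ ≤ ‖a - p'‖ * ‖x - x'‖ := by
    rw [← inner_sub_left, norm_sub_rev a p']
    exact real_inner_le_norm _ _
  have hct : t * ‖a - p'‖ ^ 2 - c / 2 * (t ^ 2 * ‖a - p'‖ ^ 2) = ‖a - p'‖ ^ 2 / (2 * c) := by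
    rw [ht]; field_simp; ring
  have hsq : ‖a - p'‖ ^ 2 ≤ ‖a - p'‖ * ‖x - x'‖ * (2 * c) := by
    rw [← div_le_iff₀ (by positivity), ← hct]
    linarith
  rcases (norm_nonneg (a - p')).eq_or_lt with h0 | h0
  · rw [← h0]; positivity
  · exact le_of_mul_le_mul_left (by linarith) h0

open MeasureTheory in
-- Jensen's lemma: the slope map is Lipschitz, so it cannot spread a null set over a ball.
theorem exists_norm_le_mem_proxSuperdiff_zero_of_ae [FiniteDimensional ℝ E] [MeasurableSpace E]
    [BorelSpace E] {r : ℝ} {P : E → Prop} (hc : 0 < c) (hf : ∀ x, (proxSubdiff c f x).Nonempty)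
    (hmax : ∀ p, ∃ x, p ∈ proxSuperdiff 0 f x)
    (hP : ∀ᵐ x ∂(μH[Module.finrank ℝ E] : Measure E), P x) (hr : 0 < r) :
    ∃ p x, ‖p‖ ≤ r ∧ p ∈ proxSuperdiff 0 f x ∧ P x := by
  by_contra! hcon
  set μ : Measure E := μH[Module.finrank ℝ E] with hμ
  set S : Set E := {x | ∃ p, ‖p‖ ≤ r ∧ p ∈ proxSuperdiff 0 f x}
  have hS0 : μ S = 0 := measure_mono_null (fun x ⟨p, hp, hx⟩ => hcon p x hp hx) hP
  choose! slope _ hslope using fun x (hx : x ∈ S) => hx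
  have hlip : LipschitzOnWith (2 * c).toNNReal slope S := by
    refine LipschitzOnWith.of_dist_le_mul fun x hx y hy => ?_
    rw [dist_eq_norm, dist_eq_norm, Real.coe_toNNReal _ (by positivity)]
    exact norm_sub_le_of_mem_proxSuperdiff_zero hc (hf x) (hslope x hx) (hslope y hy)
  have himage : μ (slope '' S) = 0 := by
    have := hlip.hausdorffMeasure_image_le (d := (Module.finrank ℝ E : ℝ)) (by positivity)
    rwa [← hμ, hS0, mul_zero, nonpos_iff_eq_zero] at this
  have hball : Metric.ball (0 : E) r ⊆ slope '' S := by
    intro p hp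
    obtain ⟨x, hx⟩ := hmax p
    have hxS : x ∈ S := ⟨p, by simpa using (Metric.mem_ball.1 hp).le, hx⟩
    obtain ⟨a, ha⟩ := hf x
    exact ⟨x, hxS, (eq_of_mem_proxSubdiff_of_mem_proxSuperdiff ha (hslope x hxS)).symm.trans
      (eq_of_mem_proxSubdiff_of_mem_proxSuperdiff ha hx)⟩
  exact (Metric.measure_ball_pos μ 0 hr).ne' (measure_mono_null hball himage)

end ProximalSlopes

section GradientTaylor

variable {E : Type*} [NormedAddCommGroup E] [InnerProductSpace ℝ E] {f : E → ℝ} {g : E → E}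

theorem hasGradientAt_of_mem_proxSubdiff [CompleteSpace E] {c : ℝ} {k : NNReal}
    (hg : ∀ x, g x ∈ proxSubdiff c f x) (hlip : LipschitzWith k g) (x : E) :
    HasGradientAt f (g x) x := by
  rw [hasGradientAt_iff_isLittleO_nhds_zero]
  have hbound (h : E) : ‖f (x + h) - f x - ⟪g x, h⟫_ℝ‖ ≤ (k + |c| / 2) * ‖‖h‖ ^ 2‖ := by
    have hlow := hg x (x + h)
    have hupp := hg (x + h) x
    rw [add_sub_cancel_left] at hlow
    rw [sub_add_cancel_left, inner_neg_right, norm_neg] at hupp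
    have hinner : ⟪g (x + h), h⟫_ℝ - ⟪g x, h⟫_ℝ ≤ k * ‖h‖ ^ 2 := by
      have hgg := hlip.dist_le_mul (x + h) x
      rw [dist_self_add_left, dist_eq_norm] at hgg
      rw [← inner_sub_left, sq, ← mul_assoc]
      exact (real_inner_le_norm _ _).trans (by gcongr)
    have habs : c / 2 * ‖h‖ ^ 2 ≤ |c| / 2 * ‖h‖ ^ 2 := by
      gcongr; exact le_abs_self c
    have hk : 0 ≤ k * ‖h‖ ^ 2 := by positivity
    rw [Real.norm_eq_abs, Real.norm_of_nonneg (sq_nonneg _), abs_le]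
    constructor <;> linarith
  exact (Asymptotics.IsBigO.of_bound _ (Eventually.of_forall hbound)).trans_isLittleO
    (Asymptotics.isLittleO_norm_pow_id one_lt_two)

theorem inner_symm_of_hasFDerivAt_gradient [CompleteSpace E] {x : E} {D : E →L[ℝ] E}
    (hf : ∀ y, HasGradientAt f (g y) y) (hD : HasFDerivAt g D x) (h k : E) :
    ⟪D h, k⟫_ℝ = ⟪D k, h⟫_ℝ := by
  have hD' : HasFDerivAt (fun y => innerSL ℝ (g y)) ((innerSL ℝ).comp D) x :=
    (innerSL ℝ).hasFDerivAt.comp x hD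
  exact second_derivative_symmetric (fun y => (hf y).hasFDerivAt) hD' h k

theorem taylor_two_isLittleO_of_hasFDerivAt_gradient [CompleteSpace E] {x : E} {D : E →L[ℝ] E}
    (hf : ∀ y, HasGradientAt f (g y) y) (hD : HasFDerivAt g D x) :
    (fun h => f (x + h) - f x - ⟪g x, h⟫_ℝ - 1 / 2 * ⟪D h, h⟫_ℝ) =o[nhds 0] fun h => ‖h‖ ^ 2 := by
  set R : E → ℝ := fun h => f (x + h) - ⟪g x, h⟫_ℝ - 1 / 2 * ⟪D h, h⟫_ℝ with hR
  have hderiv (h : E) : HasFDerivAt R (innerSL ℝ (g (x + h) - g x - D h)) h := by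
    have hfx := (hf (x + h)).hasFDerivAt.comp h ((hasFDerivAt_id h).const_add x)
    have hquad := ((D.hasFDerivAt (x := h)).inner ℝ (hasFDerivAt_id h)).const_mul (1 / 2)
    refine ((hfx.sub (innerSL ℝ (g x)).hasFDerivAt).sub hquad).congr_fderiv ?_
    ext k
    simp [inner_symm_of_hasFDerivAt_gradient hf hD k h, real_inner_comm, ← two_mul]
  rw [Asymptotics.isLittleO_iff]
  intro τ hτ
  obtain ⟨ρ, hρ, hsmall⟩ := Metric.eventually_nhds_iff_ball.1
    ((hasFDerivAt_iff_isLittleO_nhds_zero.1 hD).def hτ)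
  filter_upwards [Metric.ball_mem_nhds 0 hρ] with h hh
  have hbound (k : E) (hk : k ∈ Metric.closedBall 0 ‖h‖) :
      ‖innerSL ℝ (g (x + k) - g x - D k)‖ ≤ τ * ‖h‖ := by
    rw [mem_closedBall_zero_iff] at hk
    rw [innerSL_apply_norm]
    exact (hsmall k (by rw [mem_ball_zero_iff] at hh ⊢; exact hk.trans_lt hh)).trans (by gcongr)
  have hmvt := (convex_closedBall (0 : E) ‖h‖).norm_image_sub_le_of_norm_hasFDerivWithin_le
    (fun k _ => (hderiv k).hasFDerivWithinAt) hbound (Metric.mem_closedBall_self (norm_nonneg h))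
    (mem_closedBall_zero_iff.2 le_rfl)
  simp only [hR, add_zero, inner_zero_right, mul_zero, sub_zero, map_zero] at hmvt
  rw [Real.norm_of_nonneg (sq_nonneg ‖h‖), sq, ← mul_assoc]
  refine (le_of_eq ?_).trans hmvt
  congr 1
  ring

end GradientTaylor

section SupConvolution

variable {E : Type*} [NormedAddCommGroup E] {C : ℝ} {u : E → ℝ} {x y : E}

/-- The maximisers in the definition of the sup-convolution of `u` at `x`. -/
def proxPoints (C : ℝ) (u : E → ℝ) (x : E) : Set E :=
  {y | ∀ z, u z - C * ‖x - z‖ ^ 2 ≤ u y - C * ‖x - y‖ ^ 2}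

/-- The sup-convolution of `u`. -/
def supConv (C : ℝ) (u : E → ℝ) (x : E) : ℝ :=
  ⨆ z, u z - C * ‖x - z‖ ^ 2

theorem supConv_eq (hy : y ∈ proxPoints C u x) : supConv C u x = u y - C * ‖x - y‖ ^ 2 :=
  le_antisymm (ciSup_le hy) (le_ciSup (f := fun z => u z - C * ‖x - z‖ ^ 2)
    ⟨_, Set.forall_mem_range.2 hy⟩ y)

theorem le_supConv (hy : y ∈ proxPoints C u x) (z : E) : u z - C * ‖x - z‖ ^ 2 ≤ supConv C u x :=
  (hy z).trans_eq (supConv_eq hy).symm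

variable [InnerProductSpace ℝ E] {L : ℝ} {x' y' : E}

theorem norm_sub_le_of_mem_proxPoints (hC : 0 < C) (hu : SemiconcaveWith L C u)
    (hy : y ∈ proxPoints C u x) : ‖x - y‖ ≤ 2 * L / C := by
  have hyx := hy x
  have hgrowth := hu.le_add x y
  rw [norm_sub_rev y x] at hgrowth
  simp only [sub_self, norm_zero] at hyx
  rw [le_div_iff₀ hC]
  rcases (norm_nonneg (x - y)).eq_or_lt with h0 | h0
  · rw [← h0, zero_mul]
    linarith [hu.nonneg]
  · exact le_of_mul_le_mul_left (by linarith) h0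

theorem proxPoints_nonempty [ProperSpace E] (hC : 0 < C) (hu : SemiconcaveWith L C u) (x : E) :
    (proxPoints C u x).Nonempty := by
  have := hu.continuous
  have hR : 0 ≤ 2 * L / C := div_nonneg (by linarith [hu.nonneg]) hC.le
  obtain ⟨y, -, hmax⟩ := (isCompact_closedBall x (2 * L / C)).exists_isMaxOn
    ⟨x, Metric.mem_closedBall_self hR⟩
    (f := fun z => u z - C * ‖x - z‖ ^ 2) (by fun_prop)
  refine ⟨y, fun z => ?_⟩
  by_cases hz : z ∈ Metric.closedBall x (2 * L / C)
  · exact hmax hz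
  · have hxy : u x - C * ‖x - x‖ ^ 2 ≤ u y - C * ‖x - y‖ ^ 2 :=
      hmax (Metric.mem_closedBall_self hR)
    have hgrowth := hu.le_add x z
    rw [Metric.mem_closedBall, dist_eq_norm, not_le, div_lt_iff₀ hC] at hz
    simp only [sub_self, norm_zero] at hxy
    rw [norm_sub_rev x z]
    nlinarith [norm_nonneg (z - x)]

theorem norm_sub_midpoint_sq (a y z : E) :
    ‖a - midpoint ℝ y z‖ ^ 2 = (‖a - y‖ ^ 2 + ‖a - z‖ ^ 2) / 2 - ‖y - z‖ ^ 2 / 4 := by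
  have hmid : a - midpoint ℝ y z = (1 / 2 : ℝ) • ((a - y) + (a - z)) := by
    rw [midpoint_eq_smul_add, invOf_eq_inv]; module
  have hpar := parallelogram_law_with_norm ℝ (a - z) (a - y)
  rw [sub_sub_sub_cancel_left] at hpar
  rw [hmid, norm_smul, mul_pow, add_comm (a - y)]
  norm_num
  linarith

theorem norm_sub_le_four_mul_of_mem_proxPoints (hC : 0 < C) (hu : SemiconcaveWith L C u)
    (hy : y ∈ proxPoints C u x) (hy' : y' ∈ proxPoints C u x') :
    ‖y - y'‖ ≤ 4 * ‖x - x'‖ := by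
  have hmid := hy (midpoint ℝ y y')
  have hmid' := hy' (midpoint ℝ y y')
  rw [norm_sub_midpoint_sq] at hmid hmid'
  have hcross : ‖x - y'‖ ^ 2 + ‖x' - y‖ ^ 2 - ‖x - y‖ ^ 2 - ‖x' - y'‖ ^ 2 =
      2 * ⟪x - x', y - y'⟫_ℝ := by
    simp only [norm_sub_sq_real, inner_sub_left, inner_sub_right]
    ring
  have hsq : C * (‖y - y'‖ * ‖y - y'‖) ≤ C * (‖y - y'‖ * (4 * ‖x - x'‖)) := by
    nlinarith [hu.add_le_two_mul_midpoint y y', real_inner_le_norm (x - x') (y - y')]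
  rcases (norm_nonneg (y - y')).eq_or_lt with h0 | h0
  · rw [← h0]; positivity
  · exact le_of_mul_le_mul_left (le_of_mul_le_mul_left hsq hC) h0

theorem smul_sub_mem_proxSubdiff_supConv [ProperSpace E] (hC : 0 < C)
    (hu : SemiconcaveWith L C u) (hy : y ∈ proxPoints C u x) :
    (2 * C) • (y - x) ∈ proxSubdiff (2 * C) (supConv C u) x := by
  intro z
  obtain ⟨y', hy'⟩ := proxPoints_nonempty hC hu z
  have hz := le_supConv hy' y
  rw [show z - y = (z - x) - (y - x) by abel, norm_sub_sq_real, norm_sub_rev y x] at hz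
  rw [supConv_eq hy, real_inner_smul_left, real_inner_comm]
  linarith

theorem semiconvexWith_supConv [ProperSpace E] (hC : 0 < C) (hu : SemiconcaveWith L C u) :
    SemiconvexWith (4 * L) (2 * C) (supConv C u) := by
  intro x
  obtain ⟨y, hy⟩ := proxPoints_nonempty hC hu x
  refine ⟨_, smul_sub_mem_proxSubdiff_supConv hC hu hy, ?_⟩
  rw [norm_smul, Real.norm_of_nonneg (by positivity), norm_sub_rev]
  have := norm_sub_le_of_mem_proxPoints hC hu hy
  rw [le_div_iff₀ hC] at this
  linarith

end SupConvolution

section Contact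

variable {E : Type*} [NormedAddCommGroup E] [InnerProductSpace ℝ E]

/-- `(x, ξ)` maximises the doubled function `(z, ζ) ↦ W z - v ζ - c‖ζ - z‖² - ⟪p, z⟫` over
`E × K`. -/
def IsContact (c : ℝ) (K : Set E) (W v : E → ℝ) (p x ξ : E) : Prop :=
  ξ ∈ K ∧ ∀ z, ∀ ζ ∈ K, W z - v ζ - c * ‖ζ - z‖ ^ 2 - ⟪p, z⟫_ℝ ≤
    W x - v ξ - c * ‖ξ - x‖ ^ 2 - ⟪p, x⟫_ℝ

variable {c M : ℝ} {K : Set E} {W v : E → ℝ} {p x ξ : E}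

theorem SemiconvexWith.sub_inner_le_add (hW : SemiconvexWith M c W) (p z ζ : E) :
    W z - c * ‖ζ - z‖ ^ 2 - ⟪p, z⟫_ℝ ≤
      W ζ - ⟪p, ζ⟫_ℝ + ‖ζ - z‖ * (M + ‖p‖ - c / 2 * ‖ζ - z‖) := by
  have hgrowth := hW.le_add ζ z
  have hinner := real_inner_le_norm p (ζ - z)
  rw [inner_sub_right] at hinner
  rw [norm_sub_rev z ζ] at hgrowth
  linarith

theorem IsContact.norm_sub_le (hc : 0 < c) (hW : SemiconvexWith M c W)
    (h : IsContact c K W v p x ξ) : ‖ξ - x‖ ≤ 2 * (M + ‖p‖) / c := by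
  have hdiag := h.2 ξ ξ h.1
  have hfar := hW.sub_inner_le_add p x ξ
  simp only [sub_self, norm_zero] at hdiag
  rw [le_div_iff₀ hc]
  rcases (norm_nonneg (ξ - x)).eq_or_lt with h0 | h0
  · rw [← h0, zero_mul]
    linarith [hW.nonneg, norm_nonneg p]
  · have : 0 ≤ M + ‖p‖ - c / 2 * ‖ξ - x‖ := nonneg_of_mul_nonneg_right (by linarith) h0
    linarith

theorem exists_isContact [ProperSpace E] (hc : 0 < c) (hW : SemiconvexWith M c W)
    (hK : IsCompact K) (hKne : K.Nonempty) (hv : LowerSemicontinuousOn v K) (p : E) :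
    ∃ x ξ, IsContact c K W v p x ξ := by
  have hWc := hW.continuous
  obtain ⟨R₀, hR₀⟩ := hK.isBounded.exists_norm_le
  obtain ⟨k, hk⟩ := hKne
  set R : ℝ := R₀ + 2 * (M + ‖p‖) / c
  have hR₀R : R₀ ≤ R :=
    le_add_of_nonneg_right (div_nonneg (by linarith [hW.nonneg, norm_nonneg p]) hc.le)
  have hlsc : LowerSemicontinuousOn (fun q : E × E =>
      v q.1 + (c * ‖q.1 - q.2‖ ^ 2 + ⟪p, q.2⟫_ℝ - W q.2)) (K ×ˢ Metric.closedBall 0 R) :=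
    (hv.comp continuous_fst.continuousOn fun _ hq => hq.1).add
      ((by fun_prop : Continuous fun q : E × E => c * ‖q.1 - q.2‖ ^ 2 + ⟪p, q.2⟫_ℝ - W q.2)
        |>.lowerSemicontinuous.lowerSemicontinuousOn _)
  obtain ⟨⟨ξ, x⟩, ⟨hξ, -⟩, hmin⟩ := hlsc.exists_isMinOn
    (Set.Nonempty.prod ⟨k, hk⟩ ⟨k, mem_closedBall_zero_iff.2 ((hR₀ k hk).trans hR₀R)⟩)
    (hK.prod (isCompact_closedBall _ _))
  have hmin' (ζ : E) (hζ : ζ ∈ K) (z : E) (hz : ‖z‖ ≤ R) :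
      v ξ + (c * ‖ξ - x‖ ^ 2 + ⟪p, x⟫_ℝ - W x) ≤ v ζ + (c * ‖ζ - z‖ ^ 2 + ⟪p, z⟫_ℝ - W z) :=
    hmin (Set.mk_mem_prod hζ (mem_closedBall_zero_iff.2 hz))
  refine ⟨x, ξ, hξ, fun z ζ hζ => ?_⟩
  by_cases hz : ‖z‖ ≤ R
  · linarith [hmin' ζ hζ z hz]
  · have hdiag := hmin' ζ hζ ζ ((hR₀ ζ hζ).trans hR₀R)
    simp only [sub_self, norm_zero] at hdiag
    have hfar : 2 * (M + ‖p‖) / c ≤ ‖ζ - z‖ := by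
      linarith [norm_sub_norm_le z ζ, norm_sub_rev z ζ, hR₀ ζ hζ]
    rw [div_le_iff₀ hc] at hfar
    have hneg : ‖ζ - z‖ * (M + ‖p‖ - c / 2 * ‖ζ - z‖) ≤ 0 :=
      mul_nonpos_of_nonneg_of_nonpos (norm_nonneg _) (by linarith)
    linarith [hW.sub_inner_le_add p z ζ]

theorem add_smul_sub_mem_proxSubdiff {Ξ : E → E} {a : E}
    (hΞ : ∀ x z, v (Ξ z) + c * ‖Ξ z - z‖ ^ 2 ≤ v (Ξ x) + c * ‖Ξ x - z‖ ^ 2)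
    (ha : a ∈ proxSubdiff c W x) :
    a + (2 * c) • (Ξ x - x) ∈
      proxSubdiff (3 * c) (fun z => W z - (v (Ξ z) + c * ‖Ξ z - z‖ ^ 2)) x := by
  intro z
  have hmin := hΞ x z
  have hexpand := norm_sub_sq_real (Ξ x - x) (z - x)
  rw [sub_sub_sub_cancel_right] at hexpand
  rw [hexpand] at hmin
  rw [inner_add_left, real_inner_smul_left]
  linarith only [ha z, hmin]

open MeasureTheory in
theorem exists_isContact_of_ae [FiniteDimensional ℝ E] [MeasurableSpace E] [BorelSpace E]
    {r : ℝ} {P : E → Prop} (hc : 0 < c) (hW : SemiconvexWith M c W) (hK : IsCompact K)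
    (hKne : K.Nonempty) (hv : LowerSemicontinuousOn v K)
    (hP : ∀ᵐ x ∂(μH[Module.finrank ℝ E] : Measure E), P x) (hr : 0 < r) :
    ∃ p x ξ, ‖p‖ ≤ r ∧ IsContact c K W v p x ξ ∧ P x := by
  have hmin (z : E) : ∃ ξ ∈ K, ∀ ζ ∈ K, v ξ + c * ‖ξ - z‖ ^ 2 ≤ v ζ + c * ‖ζ - z‖ ^ 2 :=
    (hv.add ((by fun_prop : Continuous fun ζ => c * ‖ζ - z‖ ^ 2).lowerSemicontinuous
      |>.lowerSemicontinuousOn K)).exists_isMinOn hKne hK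
  choose Ξ hΞK hΞ using hmin
  obtain ⟨p, x, hp, hpx, hPx⟩ := exists_norm_le_mem_proxSuperdiff_zero_of_ae
    (f := fun z => W z - (v (Ξ z) + c * ‖Ξ z - z‖ ^ 2)) (by positivity : 0 < 3 * c)
    (fun x =>
      let ⟨_, ha, _⟩ := hW x
      ⟨_, add_smul_sub_mem_proxSubdiff (fun x z => hΞ z (Ξ x) (hΞK x)) ha⟩)
    (fun p => by
      obtain ⟨x, ξ, hξ, hmax⟩ := exists_isContact hc hW hK hKne hv p
      refine ⟨x, fun z => ?_⟩
      have := hmax z (Ξ z) (hΞK z)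
      have := hΞ x ξ hξ
      rw [inner_sub_right]
      linarith) hP hr
  refine ⟨p, x, Ξ x, hp, ⟨hΞK x, fun z ζ hζ => ?_⟩, hPx⟩
  have hz := hpx z
  rw [inner_sub_right] at hz
  linarith [hΞ z ζ hζ]

end Contact

section QuadraticForms

variable {n r : ℕ}

theorem quadForm_eq_dotProduct (X : Matrix (Fin n) (Fin n) ℝ) (v : EuclideanSpace ℝ (Fin n)) :
    quadForm X v = v ⬝ᵥ X *ᵥ v := by
  simp only [quadForm, dotProduct, Matrix.mulVec, Finset.mul_sum]
  exact Finset.sum_congr rfl fun i _ => Finset.sum_congr rfl fun j _ => by ring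

theorem quadForm_eq_inner (X : Matrix (Fin n) (Fin n) ℝ) (v : EuclideanSpace ℝ (Fin n)) :
    quadForm X v = ⟪Matrix.toEuclideanCLM (𝕜 := ℝ) X v, v⟫_ℝ := by
  rw [quadForm_eq_dotProduct, real_inner_comm, Matrix.inner_toEuclideanCLM]

theorem exists_isSymm_quadForm_eq {G : EuclideanSpace ℝ (Fin n) →ₗ[ℝ] EuclideanSpace ℝ (Fin n)}
    (hG : G.IsSymmetric) :
    ∃ X : Matrix (Fin n) (Fin n) ℝ, X.IsSymm ∧ ∀ v, quadForm X v = ⟪G v, v⟫_ℝ := by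
  obtain ⟨X, rfl⟩ := (Matrix.toEuclideanLin (𝕜 := ℝ)).surjective G
  refine ⟨X, ?_, quadForm_eq_inner X⟩
  rwa [Matrix.isSymmetric_toEuclideanLin_iff, Matrix.IsHermitian,
    Matrix.conjTranspose_eq_transpose_of_trivial] at hG

theorem quadForm_add (X Y : Matrix (Fin n) (Fin n) ℝ) (v : EuclideanSpace ℝ (Fin n)) :
    quadForm (X + Y) v = quadForm X v + quadForm Y v := by
  simp only [quadForm_eq_dotProduct, Matrix.add_mulVec, dotProduct_add]

theorem quadForm_smul (c : ℝ) (X : Matrix (Fin n) (Fin n) ℝ) (v : EuclideanSpace ℝ (Fin n)) :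
    quadForm (c • X) v = c * quadForm X v := by
  simp only [quadForm_eq_dotProduct, Matrix.smul_mulVec, dotProduct_smul, smul_eq_mul]

theorem quadForm_neg (X : Matrix (Fin n) (Fin n) ℝ) (v : EuclideanSpace ℝ (Fin n)) :
    quadForm (-X) v = -quadForm X v := by
  simp only [quadForm_eq_dotProduct, Matrix.neg_mulVec, dotProduct_neg]

theorem quadForm_vecMulVec_self (p v : EuclideanSpace ℝ (Fin n)) :
    quadForm (Matrix.vecMulVec p p) v = ⟪p, v⟫_ℝ ^ 2 := by
  rw [quadForm_eq_dotProduct, Matrix.vecMulVec_mulVec, dotProduct_comm, op_smul_eq_smul,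
    smul_dotProduct, smul_eq_mul, sq, EuclideanSpace.inner_eq_star_dotProduct, star_trivial,
    dotProduct_comm v.ofLp]

theorem quadForm_isBigO (X : Matrix (Fin n) (Fin n) ℝ) (l : Filter (EuclideanSpace ℝ (Fin n))) :
    quadForm X =O[l] fun v => ‖v‖ ^ 2 := by
  refine Asymptotics.IsBigO.of_bound ‖Matrix.toEuclideanCLM (𝕜 := ℝ) X‖
    (Eventually.of_forall fun v => ?_)
  rw [quadForm_eq_inner, Real.norm_of_nonneg (sq_nonneg ‖v‖), sq, ← mul_assoc]
  exact (norm_inner_le_norm _ _).trans (by gcongr; exact ContinuousLinearMap.le_opNorm _ _)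

theorem trace_mul_transpose_mul (S : Matrix (Fin n) (Fin r) ℝ) (X : Matrix (Fin n) (Fin n) ℝ) :
    (S * Sᵀ * X).trace = ∑ j, quadForm X (WithLp.toLp 2 (Sᵀ j)) := by
  rw [Matrix.mul_assoc, Matrix.trace_mul_comm]
  refine Finset.sum_congr rfl fun j _ => ?_
  rw [quadForm_eq_dotProduct, Matrix.diag_apply, Matrix.mul_assoc]
  rfl

theorem mnorm_sq (M : Matrix (Fin n) (Fin r) ℝ) :
    mnorm M ^ 2 = ∑ j, ‖WithLp.toLp 2 (Mᵀ j)‖ ^ 2 := by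
  rw [mnorm, Real.sq_sqrt (by positivity), Finset.sum_comm]
  simp only [EuclideanSpace.real_norm_sq_eq, Matrix.transpose_apply]

theorem trace_le_trace_add_of_quadForm_le {Q Z : Matrix (Fin n) (Fin n) ℝ} {c : ℝ}
    (h : ∀ v w, quadForm Q v ≤ quadForm Z w + c * ‖v - w‖ ^ 2) (S S' : Matrix (Fin n) (Fin r) ℝ) :
    (S * Sᵀ * Q).trace ≤ (S' * S'ᵀ * Z).trace + c * mnorm (S - S') ^ 2 := by
  rw [trace_mul_transpose_mul, trace_mul_transpose_mul, mnorm_sq, Finset.mul_sum,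
    ← Finset.sum_add_distrib]
  exact Finset.sum_le_sum fun j _ => h _ _

theorem inner_toLp_mulVec (S : Matrix (Fin n) (Fin r) ℝ) (p : EuclideanSpace ℝ (Fin n))
    (e : Fin r → ℝ) : ⟪p, WithLp.toLp 2 (S *ᵥ e)⟫_ℝ = sigmaT S p ⬝ᵥ e := by
  rw [EuclideanSpace.inner_eq_star_dotProduct, star_trivial, dotProduct_comm,
    Matrix.dotProduct_mulVec, sigmaT, Matrix.mulVec_transpose]

theorem trace_mul_transpose_mul_vecMulVec_self (S : Matrix (Fin n) (Fin r) ℝ)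
    (p : EuclideanSpace ℝ (Fin n)) :
    (S * Sᵀ * Matrix.vecMulVec p p).trace = sigmaT S p ⬝ᵥ sigmaT S p := by
  rw [trace_mul_transpose_mul]
  refine Finset.sum_congr rfl fun j _ => ?_
  rw [quadForm_vecMulVec_self, sq, EuclideanSpace.inner_eq_star_dotProduct, star_trivial]
  rfl

theorem norm_toLp_mulVec_le (S : Matrix (Fin n) (Fin r) ℝ) (e : Fin r → ℝ) :
    ‖WithLp.toLp 2 (S *ᵥ e)‖ ≤ mnorm S * ‖WithLp.toLp 2 e‖ := by
  refine abs_le_of_sq_le_sq' ?_ (by unfold mnorm; positivity) |>.2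
  rw [mul_pow, mnorm, Real.sq_sqrt (by positivity), EuclideanSpace.real_norm_sq_eq,
    EuclideanSpace.real_norm_sq_eq, Finset.sum_mul]
  exact Finset.sum_le_sum fun i _ =>
    Finset.sum_mul_sq_le_sq_mul_sq Finset.univ (S i) e

end QuadraticForms

section ParallelSum

variable {E : Type*} [NormedAddCommGroup E] [InnerProductSpace ℝ E] {G : E →ₗ[ℝ] E} {c μ : ℝ}

theorem inner_apply_add_mul_norm_sub_sq (hG : G.IsSymmetric) {h m : E} (hm : G m = c • (h - m))
    (h' : E) : ⟪G h', h'⟫_ℝ + c * ‖h - h'‖ ^ 2 =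
      ⟪c • (h - m), h⟫_ℝ + (⟪G (h' - m), h' - m⟫_ℝ + c * ‖h' - m‖ ^ 2) := by
  have hsymm := hG h' m
  simp only [hm, map_sub, norm_sub_sq_real, inner_sub_left, inner_sub_right, real_inner_smul_left,
    real_inner_smul_right, real_inner_self_eq_norm_sq, real_inner_comm h' h, real_inner_comm m h,
    real_inner_comm h' m] at hsymm ⊢
  linarith

theorem exists_apply_eq_smul_sub [FiniteDimensional ℝ E]
    (hμ : ∀ h, -(μ * ‖h‖ ^ 2) ≤ ⟪G h, h⟫_ℝ) (hμc : μ < c) :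
    ∃ M : E →ₗ[ℝ] E, ∀ h, G (M h) = c • (h - M h) := by
  have hinj : Function.Injective (G + c • (LinearMap.id : E →ₗ[ℝ] E)) := by
    rw [injective_iff_map_eq_zero]
    intro h hh
    have hzero : ⟪G h, h⟫_ℝ + c * ‖h‖ ^ 2 = 0 := by
      rw [← real_inner_self_eq_norm_sq, ← real_inner_smul_left, ← inner_add_left]
      exact (congrArg (⟪·, h⟫_ℝ) hh).trans (inner_zero_left h)
    by_contra hne
    nlinarith [hμ h, pow_pos (norm_pos_iff.2 hne) 2]
  let T := LinearEquiv.ofInjectiveEndo _ hinj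
  refine ⟨c • (T.symm : E →ₗ[ℝ] E), fun h => ?_⟩
  have hT : G (T.symm h) + c • T.symm h = h := T.apply_symm_apply h
  calc G (c • T.symm h) = c • G (T.symm h) := map_smul _ _ _
    _ = c • (h - c • T.symm h) := by rw [← eq_sub_iff_add_eq.2 hT]

theorem exists_parallelSum [FiniteDimensional ℝ E] (hG : G.IsSymmetric)
    (hμ : ∀ h, -(μ * ‖h‖ ^ 2) ≤ ⟪G h, h⟫_ℝ) (hμc : μ < c) :
    ∃ M Q : E →ₗ[ℝ] E, Q.IsSymmetric ∧
      (∀ h, ⟪Q h, h⟫_ℝ = ⟪G (M h), M h⟫_ℝ + c * ‖h - M h‖ ^ 2) ∧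
      ∀ h h', ⟪Q h, h⟫_ℝ ≤ ⟪G h', h'⟫_ℝ + c * ‖h - h'‖ ^ 2 := by
  obtain ⟨M, hM⟩ := exists_apply_eq_smul_sub hμ hμc
  refine ⟨M, c • (LinearMap.id - M), fun h k => ?_, fun h => ?_, fun h h' => ?_⟩
  · have hsymm := hG (M h) (M k)
    simp only [hM, inner_sub_left, inner_sub_right, real_inner_smul_left,
      real_inner_smul_right, LinearMap.smul_apply, LinearMap.sub_apply, LinearMap.id_apply]
      at hsymm ⊢
    linarith
  · have hsquare := inner_apply_add_mul_norm_sub_sq hG (hM h) (M h)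
    simp only [sub_self, map_zero, inner_zero_left, norm_zero] at hsquare
    rw [hsquare]
    simp
  · rw [inner_apply_add_mul_norm_sub_sq hG (hM h) h']
    have : μ * ‖h' - M h‖ ^ 2 ≤ c * ‖h' - M h‖ ^ 2 := by gcongr
    exact le_add_of_nonneg_right (by linarith [hμ (h' - M h)])

theorem neg_mul_norm_sq_le_of_mem_proxSubdiff {f : E → ℝ} {a x : E} (ha : a ∈ proxSubdiff c f x)
    (hf : (fun h => f (x + h) - f x - ⟪a, h⟫_ℝ - 1 / 2 * ⟪G h, h⟫_ℝ) =o[nhds 0]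
      fun h => ‖h‖ ^ 2) (h : E) : -(c * ‖h‖ ^ 2) ≤ ⟪G h, h⟫_ℝ := by
  have hray : Tendsto (fun t : ℝ => t • h) (nhdsWithin 0 (Set.Ioi 0)) (nhds 0) :=
    tendsto_nhdsWithin_of_tendsto_nhds (Continuous.tendsto' (by fun_prop) _ _ (zero_smul ℝ h))
  have hbigO : ((fun h => ‖h‖ ^ 2) ∘ fun t : ℝ => t • h) =O[nhdsWithin 0 (Set.Ioi 0)]
      fun t : ℝ => t ^ 2 := by
    refine Asymptotics.IsBigO.of_bound (‖h‖ ^ 2) (Eventually.of_forall fun t => le_of_eq ?_)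
    simp [norm_smul, mul_pow, mul_comm]
  refine le_of_forall_pos_le_add fun ε hε => ?_
  obtain ⟨t, hbound, ht⟩ := (((hf.comp_tendsto hray).trans_isBigO hbigO).def
    (half_pos hε) |>.and self_mem_nhdsWithin).exists
  have hlow := ha (x + t • h)
  have ht2 : 0 < t ^ 2 := pow_pos ht 2
  have hupp := (le_abs_self _).trans hbound
  simp only [Function.comp_apply, map_smul, real_inner_smul_left, real_inner_smul_right,
    add_sub_cancel_left, norm_smul, mul_pow, Real.norm_eq_abs, sq_abs] at hlow hupp
  rw [abs_of_pos ht2] at hupp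
  exact le_of_mul_le_mul_left (by linarith) ht2

end ParallelSum

section TheoremOnSums

variable {n : ℕ} {K S : Set (EuclideanSpace ℝ (Fin n))} {u v : EuclideanSpace ℝ (Fin n) → ℝ}
  {c C L : ℝ} {p x y ξ : EuclideanSpace ℝ (Fin n)} {X Z Q : Matrix (Fin n) (Fin n) ℝ}

theorem mem_J2plus_of_isLittleO {R : EuclideanSpace ℝ (Fin n) → ℝ} (hX : X.IsSymm)
    (hR : R =o[nhds 0] fun h => ‖h‖ ^ 2)
    (hu : ∀ h, x + h ∈ S → u (x + h) ≤ u x + ⟪p, h⟫_ℝ + 1 / 2 * quadForm X h + R h) :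
    (p, X) ∈ J2plus S u x := by
  refine ⟨hX, fun ε hε => ?_⟩
  have hshift : Tendsto (fun z => z - x) (nhdsWithin x S) (nhds 0) :=
    tendsto_nhdsWithin_of_tendsto_nhds (Continuous.tendsto' (by fun_prop) _ _ (sub_self x))
  filter_upwards [hshift.eventually (hR.def hε), self_mem_nhdsWithin] with z hz hzS
  have hjet := hu (z - x) (by rwa [add_sub_cancel])
  rw [add_sub_cancel] at hjet
  have hRz := (le_abs_self _).trans hz
  rw [Real.norm_of_nonneg (sq_nonneg _)] at hRz
  linarith

theorem IsContact.mem_J2minus {W : EuclideanSpace ℝ (Fin n) → ℝ} {g : EuclideanSpace ℝ (Fin n)}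
    (h : IsContact c K W v p x ξ) (hZ : Z.IsSymm)
    (hW : (fun h => W (x + h) - W x - ⟪g, h⟫_ℝ - 1 / 2 * quadForm Z h) =o[nhds 0]
      fun h => ‖h‖ ^ 2) : (g - p, Z) ∈ J2minus K v ξ := by
  refine mem_J2plus_of_isLittleO hZ.neg hW.neg_left fun k hk => ?_
  have hcontact := h.2 (x + k) (ξ + k) hk
  rw [add_sub_add_right_eq_sub, inner_add_right] at hcontact
  rw [quadForm_neg, inner_neg_left, inner_sub_left]
  linarith

theorem mem_J2plus_of_mem_proxPoints (hC : 0 < C) (hu : SemiconcaveWith L C u)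
    (hy : y ∈ proxPoints C u x) (hQ : Q.IsSymm) (hc : 2 * C ≤ c)
    (hW : (fun h => supConv C u (x + h) - supConv C u x - ⟪(2 * C) • (y - x), h⟫_ℝ -
      1 / 2 * quadForm Z h) =o[nhds 0] fun h => ‖h‖ ^ 2)
    (M : EuclideanSpace ℝ (Fin n) →L[ℝ] EuclideanSpace ℝ (Fin n))
    (hQM : ∀ h, quadForm Q h = quadForm Z (M h) + c * ‖h - M h‖ ^ 2) :
    ((2 * C) • (y - x), Q) ∈ J2plus S u y := by
  have hM : (fun h => ‖M h‖ ^ 2) =O[nhds 0] fun h => ‖h‖ ^ 2 := (M.isBigO_id _).norm_norm.pow 2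
  refine mem_J2plus_of_isLittleO hQ
    ((hW.comp_tendsto (Continuous.tendsto' M.continuous _ _ (map_zero M))).trans_isBigO hM)
    fun h _ => ?_
  obtain ⟨y', hy'⟩ := proxPoints_nonempty hC hu (x + M h)
  have hsup := le_supConv hy' (y + h)
  rw [show x + M h - (y + h) = (x - y) - (h - M h) by abel, norm_sub_sq_real] at hsup
  have hgap : 2 * C * ‖h - M h‖ ^ 2 ≤ c * ‖h - M h‖ ^ 2 := by gcongr
  simp only [Function.comp_apply, hQM, supConv_eq hy, real_inner_smul_left]
  rw [← neg_sub x y, inner_neg_left, inner_neg_left]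
  rw [inner_sub_right] at hsup
  linarith

theorem lipschitzWith_of_mem_proxPoints (hC : 0 < C) (hu : SemiconcaveWith L C u)
    {Y : EuclideanSpace ℝ (Fin n) → EuclideanSpace ℝ (Fin n)}
    (hY : ∀ x, Y x ∈ proxPoints C u x) : LipschitzWith 4 Y :=
  LipschitzWith.of_dist_le_mul fun x z => by
    rw [dist_eq_norm, dist_eq_norm]
    exact norm_sub_le_four_mul_of_mem_proxPoints hC hu (hY x) (hY z)

theorem exists_taylor_supConv (hC : 0 < C) (hu : SemiconcaveWith L C u)
    {Y : EuclideanSpace ℝ (Fin n) → EuclideanSpace ℝ (Fin n)}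
    (hY : ∀ x, Y x ∈ proxPoints C u x) (hx : DifferentiableAt ℝ Y x) :
    ∃ G : EuclideanSpace ℝ (Fin n) →ₗ[ℝ] EuclideanSpace ℝ (Fin n), G.IsSymmetric ∧
      (fun h => supConv C u (x + h) - supConv C u x - ⟪(2 * C) • (Y x - x), h⟫_ℝ -
        1 / 2 * ⟪G h, h⟫_ℝ) =o[nhds 0] fun h => ‖h‖ ^ 2 := by
  have hlip := (lipschitzWith_smul (2 * C)).comp
    ((lipschitzWith_of_mem_proxPoints hC hu hY).sub LipschitzWith.id)
  have hgrad := hasGradientAt_of_mem_proxSubdiff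
    (fun z => smul_sub_mem_proxSubdiff_supConv hC hu (hY z)) hlip
  have hD := (hx.hasFDerivAt.sub (hasFDerivAt_id x)).const_smul (2 * C)
  refine ⟨((2 * C) • (fderiv ℝ Y x - ContinuousLinearMap.id ℝ _) :
    EuclideanSpace ℝ (Fin n) →L[ℝ] EuclideanSpace ℝ (Fin n)), fun h k => ?_,
    taylor_two_isLittleO_of_hasFDerivAt_gradient hgrad hD⟩
  rw [real_inner_comm _ h]
  exact inner_symm_of_hasFDerivAt_gradient hgrad hD h k

theorem exists_jets_of_isCompact (hC : 0 < C) (hu : SemiconcaveWith L C u) (hK : IsCompact K)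
    (hKne : K.Nonempty) (hv : LowerSemicontinuousOn v K) {r : ℝ} (hr : 0 < r) :
    ∃ p x ξ y Z Q, ‖p‖ ≤ r ∧ ξ ∈ K ∧ ‖x - y‖ ≤ 2 * L / C ∧ ‖ξ - x‖ ≤ (4 * L + r) / C ∧
      (∀ ζ ∈ K, u ζ - v ζ - ⟪p, ζ⟫_ℝ ≤ u y - v ξ - ⟪p, x⟫_ℝ) ∧
      ((2 * C) • (y - x) - p, Z) ∈ J2minus K v ξ ∧
      ((2 * C) • (y - x), Q) ∈ J2plus Set.univ u y ∧
      ∀ h h', quadForm Q h ≤ quadForm Z h' + 4 * C * ‖h - h'‖ ^ 2 := by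
  choose Y hY using proxPoints_nonempty hC hu
  have hW := semiconvexWith_supConv hC hu
  obtain ⟨p, x, ξ, hp, hcontact, hx⟩ := exists_isContact_of_ae (by positivity) hW hK hKne hv
    (lipschitzWith_of_mem_proxPoints hC hu hY).ae_differentiableAt hr
  obtain ⟨G, hG, htaylor⟩ := exists_taylor_supConv hC hu hY hx
  obtain ⟨M, Q', hQ', hQM, hQle⟩ := exists_parallelSum hG
    (neg_mul_norm_sq_le_of_mem_proxSubdiff (smul_sub_mem_proxSubdiff_supConv hC hu (hY x)) htaylor)
    (by linarith : 2 * C < 4 * C)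
  obtain ⟨Z, hZ, hZG⟩ := exists_isSymm_quadForm_eq hG
  obtain ⟨Q, hQ, hQQ'⟩ := exists_isSymm_quadForm_eq hQ'
  simp only [← hZG, ← hQQ'] at htaylor hQM hQle
  refine ⟨p, x, ξ, Y x, Z, Q, hp, hcontact.1, norm_sub_le_of_mem_proxPoints hC hu (hY x), ?_,
    fun ζ hζ => ?_, hcontact.mem_J2minus hZ htaylor,
    mem_J2plus_of_mem_proxPoints hC hu (hY x) hQ (by linarith) htaylor
      (LinearMap.toContinuousLinearMap M) hQM, hQle⟩
  · refine (hcontact.norm_sub_le (by positivity) hW).trans ?_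
    rw [mul_div_mul_left _ _ two_ne_zero]
    gcongr
  · have hdiag := hcontact.2 ζ ζ hζ
    have hsup := le_supConv (hY ζ) ζ
    have hxξ := supConv_eq (hY x)
    simp only [sub_self, norm_zero] at hdiag hsup
    nlinarith [sq_nonneg ‖ξ - x‖, sq_nonneg ‖x - Y x‖]

end TheoremOnSums

section Jets

variable {n : ℕ} {S T : Set (EuclideanSpace ℝ (Fin n))} {u w : EuclideanSpace ℝ (Fin n) → ℝ}
  {x p : EuclideanSpace ℝ (Fin n)} {X : Matrix (Fin n) (Fin n) ℝ}

theorem J2plus_anti (hST : S ⊆ T) : J2plus T u x ⊆ J2plus S u x :=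
  fun _ h => ⟨h.1, fun ε hε => nhdsWithin_mono x hST (h.2 ε hε)⟩

theorem J2plus_subset_of_mem_nhds (hS : S ∈ nhds x) : J2plus S u x ⊆ J2plus T u x :=
  fun _ h => ⟨h.1, fun ε hε => nhdsWithin_le_nhds ((nhdsWithin_eq_nhds.2 hS) ▸ h.2 ε hε)⟩

theorem J2plus_congr (huw : u =ᶠ[nhds x] w) : J2plus S u x = J2plus S w x := by
  suffices h : ∀ {u w : EuclideanSpace ℝ (Fin n) → ℝ}, u =ᶠ[nhds x] w →
      J2plus S u x ⊆ J2plus S w x from (h huw).antisymm (h huw.symm)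
  refine fun huw pX h => ⟨h.1, fun ε hε => ?_⟩
  filter_upwards [h.2 ε hε, nhdsWithin_le_nhds huw] with y hy hyx
  rwa [← hyx, ← huw.eq_of_nhds]

theorem exists_isLittleO_of_mem_J2plus (hpX : (p, X) ∈ J2plus S u x) :
    ∃ R : EuclideanSpace ℝ (Fin n) → ℝ, R =o[nhds 0] (fun h => ‖h‖ ^ 2) ∧
      ∀ h, x + h ∈ S → u (x + h) ≤ u x + ⟪p, h⟫_ℝ + 1 / 2 * quadForm X h + R h := by
  let D : EuclideanSpace ℝ (Fin n) → ℝ :=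
    fun h => u (x + h) - u x - ⟪p, h⟫_ℝ - 1 / 2 * quadForm X h
  let V : Set (EuclideanSpace ℝ (Fin n)) := {h | x + h ∈ S}
  refine ⟨V.indicator fun h => max 0 (D h), ?_, fun h hh => ?_⟩
  · refine Asymptotics.isLittleO_iff.2 fun ε hε => ?_
    have hshift : Tendsto (x + ·) (nhds 0) (nhds x) :=
      Continuous.tendsto' (by fun_prop) _ _ (add_zero x)
    filter_upwards [hshift.eventually (eventually_nhdsWithin_iff.1 (hpX.2 ε hε))] with h hh
    simp only [add_sub_cancel_left] at hh
    by_cases hS : x + h ∈ S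
    · rw [Set.indicator_of_mem (s := V) hS, Real.norm_of_nonneg (le_max_left _ _),
        Real.norm_of_nonneg (sq_nonneg _)]
      exact max_le (by positivity) (hh hS)
    · rw [Set.indicator_of_notMem (s := V) hS, norm_zero]
      positivity
  · rw [Set.indicator_of_mem (s := V) hh]
    have hle : D h ≤ max 0 (D h) := le_max_right _ _
    simp only [D] at hle ⊢
    linarith

theorem mem_D1plus_of_mem_J2plus (hpX : (p, X) ∈ J2plus S u x) : p ∈ D1plus S u x := by
  intro ε hε
  obtain ⟨R, hR, hu⟩ := exists_isLittleO_of_mem_J2plus hpX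
  have hsmall : (fun h => 1 / 2 * quadForm X h + R h) =o[nhds 0] fun h => ‖h‖ :=
    (((quadForm_isBigO X _).const_mul_left _).add hR.isBigO).trans_isLittleO
      (Asymptotics.isLittleO_norm_pow_id one_lt_two).norm_right
  have hshift : Tendsto (fun y => y - x) (nhdsWithin x S) (nhds 0) :=
    tendsto_nhdsWithin_of_tendsto_nhds (Continuous.tendsto' (by fun_prop) _ _ (sub_self x))
  filter_upwards [hshift.eventually (hsmall.def hε), self_mem_nhdsWithin] with y hy hyS
  have hjet := hu (y - x) (by rwa [add_sub_cancel])
  have hle := (le_abs_self _).trans hy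
  rw [add_sub_cancel] at hjet
  rw [norm_norm] at hle
  linarith

theorem comp_mem_J2plus {φ : ℝ → ℝ} (hφ : Monotone φ) {φ₁ φ₂ : ℝ}
    (htaylor : (fun s => φ (u x + s) - φ (u x) - φ₁ * s - φ₂ / 2 * s ^ 2) =o[nhds 0]
      fun s => s ^ 2) (hpX : (p, X) ∈ J2plus S u x) :
    (φ₁ • p, φ₁ • X + φ₂ • Matrix.vecMulVec p p) ∈ J2plus S (φ ∘ u) x := by
  obtain ⟨R, hR, hu⟩ := exists_isLittleO_of_mem_J2plus hpX
  let e : EuclideanSpace ℝ (Fin n) → ℝ := fun h => 1 / 2 * quadForm X h + R h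
  let s : EuclideanSpace ℝ (Fin n) → ℝ := fun h => ⟪p, h⟫_ℝ + e h
  have hsq : (fun h : EuclideanSpace ℝ (Fin n) => ‖h‖ ^ 2) =o[nhds 0] fun h => ‖h‖ :=
    (Asymptotics.isLittleO_norm_pow_id one_lt_two).norm_right
  have hinner : (fun h => ⟪p, h⟫_ℝ) =O[nhds 0] fun h => ‖h‖ :=
    ((innerSL ℝ p).isBigO_id _).norm_right
  have he : e =O[nhds 0] fun h => ‖h‖ ^ 2 := ((quadForm_isBigO X _).const_mul_left _).add hR.isBigO
  have hs : s =O[nhds 0] fun h => ‖h‖ := hinner.add (he.trans hsq.isBigO)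
  have hs0 : Tendsto s (nhds 0) (nhds 0) := hs.trans_tendsto tendsto_norm_zero
  have hcross : (fun h => φ₂ / 2 * (e h * (2 * ⟪p, h⟫_ℝ + e h))) =o[nhds 0] fun h => ‖h‖ ^ 2 := by
    have hfactor : (fun h => 2 * ⟪p, h⟫_ℝ + e h) =O[nhds 0] fun h => ‖h‖ :=
      (hinner.const_mul_left 2).add (he.trans hsq.isBigO)
    refine ((he.mul hfactor).trans_isLittleO ?_).const_mul_left _
    simpa only [sq] using hsq.mul_isBigO (Asymptotics.isBigO_refl (fun h => ‖h‖) (nhds 0))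
  refine mem_J2plus_of_isLittleO ?_ ((hR.const_mul_left φ₁).add
    (hcross.add ((htaylor.comp_tendsto hs0).trans_isBigO (hs.pow 2)))) fun h hh => ?_
  · have hpp : (Matrix.vecMulVec p p).IsSymm := Matrix.transpose_vecMulVec _ _
    exact (hpX.1.smul φ₁).add (hpp.smul φ₂)
  · have hmono := hφ ((hu h hh).trans_eq (by simp only [s, e]; ring : _ = u x + s h))
    simp only [Function.comp_apply, quadForm_add, quadForm_smul, quadForm_vecMulVec_self,
      real_inner_smul_left, s, e] at hmono ⊢
    linarith

theorem exp_div_mem_J2plus {ε : ℝ} (hε : 0 < ε) (hpX : (p, X) ∈ J2plus S u x) :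
    ((Real.exp (u x / ε) / ε) • p, (Real.exp (u x / ε) / ε) • X +
      (Real.exp (u x / ε) / ε ^ 2) • Matrix.vecMulVec p p) ∈
      J2plus S (fun y => Real.exp (u y / ε)) x := by
  have hexp := (Real.exp_sub_sum_range_succ_isLittleO_pow 2).comp_tendsto
    (Continuous.tendsto' (by fun_prop : Continuous fun s : ℝ => s / ε) 0 0 (zero_div ε))
  refine comp_mem_J2plus (φ := fun t => Real.exp (t / ε))
    (fun s t hst => by dsimp only; gcongr) ?_ hpX
  refine ((hexp.const_mul_left (Real.exp (u x / ε))).trans_isBigO ?_).congr_left fun s => ?_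
  · refine ((Asymptotics.isBigO_refl _ _).const_mul_left ((ε ^ 2)⁻¹)).congr_left fun s => ?_
    rw [Function.comp_apply, div_pow, div_eq_inv_mul]
  · simp only [Function.comp_apply, Finset.sum_range_succ, Finset.sum_range_zero, add_div,
      Real.exp_add]
    norm_num
    field_simp
    ring

end Jets

section TruncatedLogarithm

variable {r ρ s s₀ t ε : ℝ}

/-- The logarithm, continued below `r` by its tangent line at `r`. This is a concave function on
the whole line, whereas `Real.log` is even. -/
def truncLog (r s : ℝ) : ℝ :=
  Real.log (max s r) + (min s r - r) / r

theorem truncLog_of_le (h : r ≤ s) : truncLog r s = Real.log s := by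
  rw [truncLog, max_eq_left h, min_eq_right h, sub_self, zero_div, add_zero]

theorem truncLog_monotone (hr : 0 < r) : Monotone (truncLog r) := fun s t hst => by
  have : 0 < max s r := lt_max_of_lt_right hr
  unfold truncLog
  gcongr

theorem truncLog_le_add_div (hr : 0 < r) (s s₀ : ℝ) :
    truncLog r s ≤ truncLog r s₀ + (s - s₀) / max s₀ r := by
  have hs : 0 < max s r := lt_max_of_lt_right hr
  have hs₀ : 0 < max s₀ r := lt_max_of_lt_right hr
  have hlog : Real.log (max s r) ≤ Real.log (max s₀ r) + (max s r - max s₀ r) / max s₀ r := by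
    have := Real.log_le_sub_one_of_pos (div_pos hs hs₀)
    rw [Real.log_div hs.ne' hs₀.ne'] at this
    rw [sub_div, div_self hs₀.ne']
    linarith
  have hmin : (min s r - r) / r ≤ (min s₀ r - r) / r + (min s r - min s₀ r) / max s₀ r := by
    rcases le_total s₀ r with h | h
    · rw [max_eq_right h, min_eq_left h, ← add_div]
      apply le_of_eq
      ring
    · rw [max_eq_left h, min_eq_right h, sub_self, zero_div, zero_add]
      rw [div_eq_mul_inv, div_eq_mul_inv]
      exact mul_le_mul_of_nonpos_left (inv_anti₀ hr h) (sub_nonpos.2 (min_le_right _ _))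
  calc truncLog r s ≤ _ := add_le_add hlog hmin
    _ = truncLog r s₀ + (max s r + min s r - (max s₀ r + min s₀ r)) / max s₀ r := by
      unfold truncLog
      ring
    _ = truncLog r s₀ + (s - s₀) / max s₀ r := by
      rw [max_add_min, max_add_min, add_sub_add_right_eq_sub]

variable {E : Type*} [NormedAddCommGroup E] {S : Set E} {x y : E}

/-- The logarithm of the distance to `S`, truncated at distance `ρ` from `S` so as to be
semiconcave on the whole space. -/
def truncLogDist (ρ : ℝ) (S : Set E) (x : E) : ℝ :=
  truncLog (ρ ^ 2) (Metric.infDist x S ^ 2) / 2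

theorem truncLogDist_of_le (hρ : 0 ≤ ρ) (h : ρ ≤ Metric.infDist x S) :
    truncLogDist ρ S x = Real.log (Metric.infDist x S) := by
  rw [truncLogDist, truncLog_of_le (by gcongr), Real.log_pow, Nat.cast_ofNat,
    mul_div_cancel_left₀ _ two_ne_zero]

theorem semiconcaveWith_mul_truncLogDist [InnerProductSpace ℝ E] [ProperSpace E]
    (hS : IsClosed S) (hSne : S.Nonempty) (hρ : 0 < ρ) (hε : 0 ≤ ε) :
    SemiconcaveWith (ε / ρ) (ε / ρ ^ 2) fun x => ε * truncLogDist ρ S x := by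
  intro x
  obtain ⟨z, hz, hxz⟩ := hS.exists_infDist_eq_dist hSne x
  rw [dist_eq_norm] at hxz
  set m := max (‖x - z‖ ^ 2) (ρ ^ 2)
  have hρm : ρ ^ 2 ≤ m := le_max_right _ _
  have hm0 : 0 < m := (pow_pos hρ 2).trans_le hρm
  refine ⟨(ε / m) • (x - z), fun y => ?_, ?_⟩
  · have hdist : Metric.infDist y S ^ 2 ≤ ‖x - z‖ ^ 2 + 2 * ⟪x - z, y - x⟫_ℝ + ‖y - x‖ ^ 2 := by
      rw [← norm_add_sq_real, sub_add_sub_comm, add_comm x, add_sub_add_right_eq_sub,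
        ← dist_eq_norm]
      exact pow_le_pow_left₀ Metric.infDist_nonneg (Metric.infDist_le_dist_of_mem hz) 2
    have htangent := truncLog_le_add_div (pow_pos hρ 2)
      (‖x - z‖ ^ 2 + 2 * ⟪x - z, y - x⟫_ℝ + ‖y - x‖ ^ 2) (‖x - z‖ ^ 2)
    have hmono := truncLog_monotone (pow_pos hρ 2) hdist
    calc ε * truncLogDist ρ S y
        ≤ ε * ((truncLog (ρ ^ 2) (‖x - z‖ ^ 2) +
            (2 * ⟪x - z, y - x⟫_ℝ + ‖y - x‖ ^ 2) / m) / 2) := by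
          unfold truncLogDist
          gcongr
          refine (hmono.trans htangent).trans_eq ?_
          congr 2
          ring
      _ = ε * truncLogDist ρ S x + ⟪(ε / m) • (x - z), y - x⟫_ℝ + ε / m / 2 * ‖y - x‖ ^ 2 := by
          rw [truncLogDist, hxz, real_inner_smul_left]
          ring
      _ ≤ ε * truncLogDist ρ S x + ⟪(ε / m) • (x - z), y - x⟫_ℝ +
            ε / ρ ^ 2 / 2 * ‖y - x‖ ^ 2 := by gcongr
  · rw [norm_smul, Real.norm_of_nonneg (by positivity), div_mul_eq_mul_div, div_le_div_iff₀ hm0 hρ,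
      mul_assoc]
    have hnorm : ‖x - z‖ ^ 2 ≤ m := le_max_left _ _
    gcongr
    nlinarith [sq_nonneg (‖x - z‖ - ρ)]

end TruncatedLogarithm

section DistanceToBoundary

variable {n : ℕ} {S Ω : Set (EuclideanSpace ℝ (Fin n))} {x y p : EuclideanSpace ℝ (Fin n)}

theorem norm_sub_norm_sub_le_inner_div {E : Type*} [NormedAddCommGroup E] [InnerProductSpace ℝ E]
    (v w : E) : ‖w‖ - ‖w - v‖ ≤ ⟪w, v⟫_ℝ / ‖w‖ := by
  rcases eq_or_ne w 0 with rfl | hw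
  · simp
  · rw [le_div_iff₀ (norm_pos_iff.2 hw)]
    have hcs := real_inner_le_norm w (w - v)
    rw [inner_sub_right, real_inner_self_eq_norm_sq] at hcs
    linarith

theorem exists_ultrafilter_tendsto_of_dist_eq_infDist {ι X : Type*} [PseudoMetricSpace X]
    [ProperSpace X] {l : Filter ι} [l.NeBot] {S : Set X} {y : X} {f z : ι → X} (hS : IsClosed S)
    (hf : Tendsto f l (nhds y)) (hzS : ∀ i, z i ∈ S)
    (hz : ∀ i, dist (f i) (z i) = Metric.infDist (f i) S) :
    ∃ U : Ultrafilter ι, U ≤ l ∧ ∃ z₀ ∈ S, dist y z₀ = Metric.infDist y S ∧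
      Tendsto z U (nhds z₀) := by
  have hU : (Ultrafilter.of l : Filter ι) ≤ l := Ultrafilter.of_le l
  have hdist : Tendsto (fun i => dist (f i) (z i)) l (nhds (Metric.infDist y S)) := by
    simp only [hz]
    exact ((Metric.continuous_infDist_pt S).tendsto y).comp hf
  have hbounded : ∀ᶠ i in l, z i ∈ S ∩ Metric.closedBall y (Metric.infDist y S + 1) := by
    filter_upwards [hdist.eventually_lt_const (lt_add_of_pos_right _ one_half_pos),
      Metric.tendsto_nhds.1 hf (1 / 2) one_half_pos] with i hi₁ hi₂
    refine ⟨hzS i, Metric.mem_closedBall.2 ?_⟩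
    linarith [dist_triangle (z i) (f i) y, dist_comm (z i) (f i)]
  obtain ⟨z₀, hz₀, hlim⟩ := ((isCompact_closedBall y _).inter_left hS).ultrafilter_le_nhds
    ((Ultrafilter.of l).map z) (le_principal_iff.2 (hU hbounded))
  exact ⟨Ultrafilter.of l, hU, z₀, hz₀.1,
    tendsto_nhds_unique ((hf.mono_left hU).dist hlim) (hdist.mono_left hU), hlim⟩

theorem exists_dist_eq_infDist_of_mem_D1plus (hS : IsClosed S) (hSne : S.Nonempty) (hy : y ∉ S)
    (hp : p ∈ D1plus Set.univ (Metric.infDist · S) y) (k : EuclideanSpace ℝ (Fin n)) :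
    ∃ z ∈ S, dist y z = Metric.infDist y S ∧ ⟪p, k⟫_ℝ ≤ ⟪y - z, k⟫_ℝ / ‖y - z‖ := by
  choose z hzS hz using fun t : ℝ => hS.exists_infDist_eq_dist hSne (y - t • k)
  have hline : Tendsto (fun t : ℝ => y - t • k) (nhdsWithin 0 (Set.Ioi 0)) (nhds y) :=
    tendsto_nhdsWithin_of_tendsto_nhds (Continuous.tendsto' (by fun_prop) _ _ (by simp))
  obtain ⟨U, hU, z₀, hz₀, hyz₀, hlim⟩ :=
    exists_ultrafilter_tendsto_of_dist_eq_infDist hS hline hzS fun t => (hz t).symm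
  refine ⟨z₀, hz₀, hyz₀, le_of_forall_pos_le_add fun ε hε => ?_⟩
  have hne : ‖y - z₀‖ ≠ 0 := norm_ne_zero_iff.2 (sub_ne_zero.2 fun h => hy (h ▸ hz₀))
  have hquot : Tendsto (fun t => ⟪y - z t, k⟫_ℝ / ‖y - z t‖ + ε) U
      (nhds (⟪y - z₀, k⟫_ℝ / ‖y - z₀‖ + ε)) :=
    (((tendsto_const_nhds.sub hlim).inner tendsto_const_nhds).div
      (tendsto_const_nhds.sub hlim).norm hne).add_const ε
  refine ge_of_tendsto hquot (hU ?_)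
  have hk : 0 < ‖k‖ + 1 := by positivity
  have hsuper := hp (ε / (‖k‖ + 1)) (div_pos hε hk)
  rw [nhdsWithin_univ] at hsuper
  filter_upwards [hline.eventually hsuper, self_mem_nhdsWithin] with t hjet ht
  have ht : 0 < t := ht
  have hdist : Metric.infDist y S ≤ ‖y - z t‖ :=
    (Metric.infDist_le_dist_of_mem (hzS t)).trans_eq (dist_eq_norm _ _)
  have hconvex := norm_sub_norm_sub_le_inner_div (t • k) (y - z t)
  rw [real_inner_smul_right, mul_div_assoc] at hconvex
  have hzt := hz t
  rw [dist_eq_norm, sub_right_comm] at hzt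
  rw [sub_sub_cancel_left, inner_neg_right, norm_neg, norm_smul, Real.norm_of_nonneg ht.le, hzt,
    real_inner_smul_right] at hjet
  have hslack : ε / (‖k‖ + 1) * (t * ‖k‖) ≤ t * ε := by
    rw [div_mul_eq_mul_div, div_le_iff₀ hk]
    nlinarith [mul_pos hε ht]
  refine le_of_mul_le_mul_left ?_ ht
  linarith

theorem bdist_pos (hΩ : IsOpen Ω) (hne : (frontier Ω).Nonempty) (hx : x ∈ Ω) : 0 < bdist Ω x :=
  (isClosed_frontier.notMem_iff_infDist_pos hne).1 fun h => h.2 (hΩ.interior_eq.symm ▸ hx)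

theorem mem_of_bdist_pos (hx : x ∈ closure Ω) (h : 0 < bdist Ω x) : x ∈ Ω := by
  by_contra hc
  exact h.ne' (Metric.infDist_zero_of_mem ⟨hx, fun h' => hc (interior_subset h')⟩)

theorem ball_bdist_subset (hΩ : IsOpen Ω) (hx : x ∈ Ω) : Metric.ball x (bdist Ω x) ⊆ Ω := by
  intro y hy
  refine (convex_ball x _).isPreconnected.subset_of_closure_inter_subset hΩ
    ⟨x, Metric.mem_ball_self (dist_nonneg.trans_lt hy), hx⟩ (fun z hz => ?_) hy
  by_contra hzΩ
  exact Metric.ball_infDist_subset_compl hz.2 ⟨hz.1, fun h => hzΩ (interior_subset h)⟩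

theorem inv_bdist_smul_sub_mem_normalDirs {z : EuclideanSpace ℝ (Fin n)} (hx : x ∈ Ω)
    (hpos : 0 < bdist Ω x) (hxz : ‖x - z‖ = bdist Ω x) :
    (bdist Ω x)⁻¹ • (x - z) ∈ normalDirs Ω z := by
  refine ⟨?_, x, hx, by rw [smul_inv_smul₀ hpos.ne', add_sub_cancel]⟩
  rw [norm_smul, norm_inv, Real.norm_of_nonneg hpos.le, hxz, inv_mul_cancel₀ hpos.ne']

theorem thickening_inter_preimage_bdist_subset {ρ δ η : ℝ} (hΩ : IsOpen Ω) (hη : η ≤ ρ) :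
    Metric.thickening η (Ω ∩ bdist Ω ⁻¹' Set.Ioo ρ δ) ⊆
      Ω ∩ bdist Ω ⁻¹' Set.Ioo (ρ - η) (δ + η) := by
  intro y hy
  obtain ⟨x, ⟨hxΩ, hρx, hxδ⟩, hyx⟩ := Metric.mem_thickening_iff.1 hy
  have hdx : bdist Ω x ≤ bdist Ω y + dist x y := Metric.infDist_le_infDist_add_dist
  have hdy : bdist Ω y ≤ bdist Ω x + dist y x := Metric.infDist_le_infDist_add_dist
  rw [dist_comm] at hdx
  exact ⟨ball_bdist_subset hΩ hxΩ (Metric.mem_ball.2 (by linarith)), by linarith, by linarith⟩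

theorem dotProduct_sigmaT_le_of_mem_D1plus {r : ℕ} (hΩ : IsOpen Ω) (hne : (frontier Ω).Nonempty)
    {s : EuclideanSpace ℝ (Fin n) → Matrix (Fin n) (Fin r) ℝ} {B : ℝ}
    (hy : y ∈ Ω) (hLip : ∀ z ∈ frontier Ω, mnorm (s y - s z) ≤ B * ‖y - z‖)
    (hperp : ∀ z ∈ frontier Ω, ∀ ν ∈ normalDirs Ω z, sigmaT (s z) ν = 0)
    (hp : p ∈ D1plus Set.univ (bdist Ω) y) :
    sigmaT (s y) p ⬝ᵥ sigmaT (s y) p ≤ (B * bdist Ω y) ^ 2 := by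
  set e := sigmaT (s y) p
  have hd := bdist_pos hΩ hne hy
  obtain ⟨z, hz, hyz, hle⟩ := exists_dist_eq_infDist_of_mem_D1plus isClosed_frontier hne
    (fun h => h.2 (hΩ.interior_eq.symm ▸ hy)) hp (WithLp.toLp 2 (s y *ᵥ e))
  have hyz : ‖y - z‖ = bdist Ω y := (dist_eq_norm y z).symm.trans hyz
  set ν := (bdist Ω y)⁻¹ • (y - z) with hν
  have hνmem : ν ∈ normalDirs Ω z := inv_bdist_smul_sub_mem_normalDirs hy hd hyz
  have hsplit : WithLp.toLp 2 (s y *ᵥ e) =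
      WithLp.toLp 2 ((s y - s z) *ᵥ e) + WithLp.toLp 2 (s z *ᵥ e) := by
    rw [← WithLp.toLp_add, ← Matrix.add_mulVec, sub_add_cancel]
  have hinner : e ⬝ᵥ e ≤ B * bdist Ω y * ‖WithLp.toLp 2 e‖ := calc
    e ⬝ᵥ e = ⟪p, WithLp.toLp 2 (s y *ᵥ e)⟫_ℝ := by rw [inner_toLp_mulVec]
    _ ≤ ⟪ν, WithLp.toLp 2 (s y *ᵥ e)⟫_ℝ := by
      rwa [hν, real_inner_smul_left, inv_mul_eq_div, ← hyz]
    _ = ⟪ν, WithLp.toLp 2 ((s y - s z) *ᵥ e)⟫_ℝ := by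
      rw [hsplit, inner_add_right, inner_toLp_mulVec (s z), hperp z hz ν hνmem, zero_dotProduct,
        add_zero]
    _ ≤ ‖ν‖ * (mnorm (s y - s z) * ‖WithLp.toLp 2 e‖) :=
      (real_inner_le_norm _ _).trans (by gcongr; exact norm_toLp_mulVec_le _ _)
    _ ≤ B * bdist Ω y * ‖WithLp.toLp 2 e‖ := by
      rw [hνmem.1, one_mul, ← hyz]
      gcongr
      exact hLip z hz
  have hsq : e ⬝ᵥ e = ‖WithLp.toLp 2 e‖ ^ 2 := by
    rw [EuclideanSpace.real_norm_sq_eq]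
    exact Finset.sum_congr rfl fun i _ => (sq _).symm
  rw [hsq] at hinner ⊢
  rcases (norm_nonneg (WithLp.toLp 2 e)).eq_or_lt with h0 | hpos
  · rw [← h0, zero_pow two_ne_zero]
    positivity
  · gcongr
    exact le_of_mul_le_mul_right (by rwa [← sq]) hpos

end DistanceToBoundary

section StrictSubsolution

variable {n r : ℕ} {Ω : Set (EuclideanSpace ℝ (Fin n))} {y β q : EuclideanSpace ℝ (Fin n)}
  {Q : Matrix (Fin n) (Fin n) ℝ} {s : EuclideanSpace ℝ (Fin n) → Matrix (Fin n) (Fin r) ℝ}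
  {B k ε ρ : ℝ}

theorem sigmaT_smul (M : Matrix (Fin n) (Fin r) ℝ) (c : ℝ) (p : EuclideanSpace ℝ (Fin n)) :
    sigmaT M (c • p) = c • sigmaT M p :=
  Matrix.mulVec_smul Mᵀ c p.ofLp

theorem exp_mul_truncLogDist_div_eventuallyEq (hε : 0 < ε) (hρ : 0 < ρ) (hy : ρ < bdist Ω y) :
    (fun x => Real.exp (ε * truncLogDist ρ (frontier Ω) x / ε)) =ᶠ[nhds y] bdist Ω := by
  have hcont : Continuous (bdist Ω) := Metric.continuous_infDist_pt _
  filter_upwards [hcont.continuousAt.eventually_const_lt hy] with x hx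
  rw [mul_div_cancel_left₀ _ hε.ne', truncLogDist_of_le hρ.le hx.le, ← bdist,
    Real.exp_log (hρ.trans hx)]

theorem neg_inner_sub_trace_le_of_mem_J2plus (hΩ : IsOpen Ω) (hne : (frontier Ω).Nonempty)
    (hε : 0 < ε) (hρ : 0 < ρ) (hyΩ : y ∈ Ω) (hy : ρ < bdist Ω y)
    (hLip : ∀ z ∈ frontier Ω, mnorm (s y - s z) ≤ B * ‖y - z‖)
    (hperp : ∀ z ∈ frontier Ω, ∀ ν ∈ normalDirs Ω z, sigmaT (s z) ν = 0)
    (hsub : ∀ pY ∈ J2plus (closure Ω) (bdist Ω) y,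
      -⟪β, pY.1⟫_ℝ - (s y * (s y)ᵀ * pY.2).trace ≤ -k)
    (hk : 2 * B ^ 2 * bdist Ω y ≤ k)
    (hq : (q, Q) ∈ J2plus Set.univ (fun x => ε * truncLogDist ρ (frontier Ω) x) y) :
    -⟪β, q⟫_ℝ - (s y * (s y)ᵀ * Q).trace ≤ -(ε * B ^ 2) := by
  set d := bdist Ω y
  have hd : 0 < d := hρ.trans hy
  have hexp := exp_mul_truncLogDist_div_eventuallyEq hε hρ hy
  have hjet := exp_div_mem_J2plus hε hq
  rw [J2plus_congr hexp, hexp.eq_of_nhds] at hjet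
  have hd_sub := hsub _ (J2plus_anti (Set.subset_univ _) hjet)
  have hσ := dotProduct_sigmaT_le_of_mem_D1plus hΩ hne hyΩ hLip hperp
    (mem_D1plus_of_mem_J2plus hjet)
  simp only [sigmaT_smul, smul_dotProduct, dotProduct_smul, smul_eq_mul] at hσ
  simp only [real_inner_smul_right, mul_add, Matrix.mul_smul, Matrix.trace_add,
    Matrix.trace_smul, trace_mul_transpose_mul_vecMulVec_self, smul_eq_mul] at hd_sub
  set N := sigmaT (s y) q ⬝ᵥ sigmaT (s y) q
  set T := -⟪β, q⟫_ℝ - (s y * (s y)ᵀ * Q).trace with hT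
  have hN : d / ε ^ 2 * N ≤ d * B ^ 2 := by
    refine le_of_mul_le_mul_left ?_ hd
    calc d * (d / ε ^ 2 * N) = d / ε * (d / ε * N) := by ring
      _ ≤ (B * d) ^ 2 := hσ
      _ = d * (d * B ^ 2) := by ring
  refine le_of_mul_le_mul_left ?_ (div_pos hd hε)
  calc d / ε * T ≤ -k + d / ε ^ 2 * N := by
        rw [hT]
        linarith
    _ ≤ -(d * B ^ 2) := by linarith
    _ = d / ε * -(ε * B ^ 2) := by field_simp

end StrictSubsolution

section Comparison

variable {n m r : ℕ} {K O V : Set (EuclideanSpace ℝ (Fin n))} {u v : EuclideanSpace ℝ (Fin n) → ℝ}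
  {L C c : ℝ}

theorem neg_inner_sub_trace_le_add {Q Z : Matrix (Fin n) (Fin n) ℝ}
    (h : ∀ w w', quadForm Q w ≤ quadForm Z w' + c * ‖w - w'‖ ^ 2)
    (β β' p q : EuclideanSpace ℝ (Fin n)) (S S' : Matrix (Fin n) (Fin r) ℝ) :
    -⟪β', q - p⟫_ℝ - (S' * S'ᵀ * Z).trace ≤ -⟪β, q⟫_ℝ - (S * Sᵀ * Q).trace +
      (‖β - β'‖ * ‖q‖ + ‖β'‖ * ‖p‖ + c * mnorm (S - S') ^ 2) := by
  have htrace := trace_le_trace_add_of_quadForm_le h S S'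
  have hq := real_inner_le_norm (β - β') q
  have hp := real_inner_le_norm β' p
  rw [inner_sub_left] at hq
  rw [inner_sub_right]
  linarith

theorem SemiconcaveWith.exists_jets_of_one_le (hC : 0 ≤ C) (hu : SemiconcaveWith L C u)
    (hK : IsCompact K) (hKne : K.Nonempty) (hv : LowerSemicontinuousOn v K) {N : ℝ}
    (hCN : C ≤ N) (hN : 1 ≤ N) :
    ∃ p q ξ y Z Q, ξ ∈ K ∧ ‖p‖ ≤ 1 / N ∧ ‖q‖ ≤ 4 * L ∧ ‖y - ξ‖ ≤ (6 * L + 1) / N ∧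
      (∀ ζ ∈ K, u ζ - v ζ ≤ u ξ - v ξ + (L * ((6 * L + 1) / N) +
        C / 2 * ((6 * L + 1) / N) ^ 2 + 1 / N * (Metric.diam K + (6 * L + 1) / N))) ∧
      (q - p, Z) ∈ J2minus K v ξ ∧ (q, Q) ∈ J2plus Set.univ u y ∧
      ∀ h h', quadForm Q h ≤ quadForm Z h' + 4 * N * ‖h - h'‖ ^ 2 := by
  have hL := hu.nonneg
  have hN0 : 0 < N := one_pos.trans_le hN
  have hN1 : 1 / N ≤ 1 := (div_le_one hN0).2 hN
  set M := 6 * L + 1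
  obtain ⟨p, x, ξ, y, Z, Q, hp, hξ, hxy, hξx, hmax, hZ, hQ, hZQ⟩ :=
    exists_jets_of_isCompact hN0 (hu.mono hCN) hK hKne hv (one_div_pos.2 hN0)
  have hq : ‖(2 * N) • (y - x)‖ ≤ 4 * L := by
    rw [norm_smul, Real.norm_of_nonneg (by positivity), norm_sub_rev]
    rw [le_div_iff₀ hN0] at hxy
    linarith
  have hξxM : ‖ξ - x‖ ≤ M / N := hξx.trans (by gcongr; linarith)
  have hyξ : ‖y - ξ‖ ≤ M / N := calc
    ‖y - ξ‖ ≤ ‖x - y‖ + ‖ξ - x‖ := by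
      rw [norm_sub_rev x, norm_sub_rev ξ]
      exact norm_sub_le_norm_sub_add_norm_sub y x ξ
    _ ≤ 2 * L / N + (4 * L + 1 / N) / N := add_le_add hxy hξx
    _ ≤ M / N := by
      rw [← add_div]
      gcongr
      linarith
  have huy : u y ≤ u ξ + L * (M / N) + C / 2 * (M / N) ^ 2 :=
    (hu.le_add ξ y).trans (by gcongr)
  refine ⟨p, _, ξ, y, Z, Q, hξ, hp, hq, hyξ, fun ζ hζ => ?_, hZ, hQ, hZQ⟩
  have hpζ : ⟪p, ζ - x⟫_ℝ ≤ 1 / N * (Metric.diam K + M / N) := by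
    refine (real_inner_le_norm _ _).trans ?_
    gcongr
    refine (norm_sub_le_norm_sub_add_norm_sub ζ ξ x).trans (add_le_add ?_ hξxM)
    rw [← dist_eq_norm]
    exact Metric.dist_le_diam_of_mem hK.isBounded hζ hξ
  rw [inner_sub_right] at hpζ
  linarith [hmax ζ hζ]

theorem SemiconcaveWith.eventually_exists_jets (hC : 0 ≤ C) (hu : SemiconcaveWith L C u)
    (hK : IsCompact K) (hv : LowerSemicontinuousOn v K) (hle : ∀ x ∈ K \ O, u x - v x ≤ c)
    {ζ : EuclideanSpace ℝ (Fin n)} (hζ : ζ ∈ K) (hlt : c < u ζ - v ζ) :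
    ∀ᶠ N in atTop, ∃ p q ξ y Z Q, ξ ∈ O ∩ K ∧ ‖p‖ ≤ 1 / N ∧ ‖q‖ ≤ 4 * L ∧
      ‖y - ξ‖ ≤ (6 * L + 1) / N ∧ (q - p, Z) ∈ J2minus K v ξ ∧ (q, Q) ∈ J2plus Set.univ u y ∧
      ∀ h h', quadForm Q h ≤ quadForm Z h' + 4 * N * ‖h - h'‖ ^ 2 := by
  set M := 6 * L + 1
  have hdiv (a : ℝ) : Tendsto (fun N : ℝ => a / N) atTop (nhds 0) :=
    tendsto_const_nhds.div_atTop tendsto_id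
  have herr : Tendsto (fun N : ℝ => L * (M / N) + C / 2 * (M / N) ^ 2 +
      1 / N * (Metric.diam K + M / N)) atTop (nhds 0) := by
    simpa using (((hdiv M).const_mul L).add (((hdiv M).pow 2).const_mul (C / 2))).add
      ((hdiv 1).mul ((hdiv M).const_add (Metric.diam K)))
  filter_upwards [eventually_ge_atTop C, eventually_ge_atTop 1,
    herr.eventually_lt_const (sub_pos.2 hlt)] with N hCN hN hsmall
  obtain ⟨p, q, ξ, y, Z, Q, hξ, hp, hq, hyξ, hmax, hjets⟩ :=
    hu.exists_jets_of_one_le hC hK ⟨ζ, hζ⟩ hv hCN hN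
  refine ⟨p, q, ξ, y, Z, Q, ⟨?_, hξ⟩, hp, hq, hyξ, hjets⟩
  by_contra hξO
  linarith [hle ξ ⟨hξ, hξO⟩, hmax ζ hζ]

theorem sub_le_of_strictSubsolution {A : Set (Fin m → ℝ)} (hA : A.Nonempty)
    {b : EuclideanSpace ℝ (Fin n) → (Fin m → ℝ) → EuclideanSpace ℝ (Fin n)}
    {σ : EuclideanSpace ℝ (Fin n) → (Fin m → ℝ) → Matrix (Fin n) (Fin r) ℝ} {B δ η : ℝ}
    (hB : 0 ≤ B) (hδ : 0 < δ) (hη : 0 < η) (hOV : Metric.thickening δ O ⊆ V)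
    (hbBdd : ∃ C, ∀ x ∈ V, ∀ α ∈ A, ‖b x α‖ ≤ C)
    (hbLip : ∀ x ∈ V, ∀ y ∈ V, ∀ α ∈ A, ‖b x α - b y α‖ ≤ B * ‖x - y‖)
    (hσLip : ∀ x ∈ V, ∀ y ∈ V, ∀ α ∈ A, mnorm (σ x α - σ y α) ≤ B * ‖x - y‖)
    (hC : 0 ≤ C) (hu : SemiconcaveWith L C u)
    (husub : ∀ y ∈ V, ∀ qQ ∈ J2plus Set.univ u y, ∀ α ∈ A,
      -⟪b y α, qQ.1⟫_ℝ - (σ y α * (σ y α)ᵀ * qQ.2).trace ≤ -η)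
    (hK : IsCompact K) (hv : LowerSemicontinuousOn v K)
    (hvsuper : ∀ x ∈ O ∩ K, ∀ qZ ∈ J2minus K v x, 0 ≤ Fop A b σ x qZ.1 qZ.2)
    (hle : ∀ x ∈ K \ O, u x - v x ≤ c) : ∀ x ∈ K, u x - v x ≤ c := by
  by_contra! hlt
  obtain ⟨ζ, hζ, hlt⟩ := hlt
  obtain ⟨Cb, hCb⟩ := hbBdd
  have hL := hu.nonneg
  set M := 6 * L + 1
  have hdiv (a : ℝ) : Tendsto (fun N : ℝ => a / N) atTop (nhds 0) :=
    tendsto_const_nhds.div_atTop tendsto_id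
  obtain ⟨N, ⟨p, q, ξ, y, Z, Q, hξ, hp, hq, hyξ, hZ, hQ, hZQ⟩, hN, hMδ, hsmall⟩ :=
    ((hu.eventually_exists_jets hC hK hv hle hζ hlt).and ((eventually_gt_atTop 0).and
      (((hdiv M).eventually_lt_const hδ).and
        ((hdiv (4 * B * M * L + Cb + 4 * B ^ 2 * M ^ 2)).eventually_lt_const hη)))).exists
  have hyV : y ∈ V := hOV (Metric.mem_thickening_iff.2
    ⟨ξ, hξ.1, (dist_eq_norm y ξ).trans_lt (hyξ.trans_lt hMδ)⟩)
  have hξV : ξ ∈ V := hOV (Metric.self_subset_thickening hδ O hξ.1)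
  suffices hneg : ∀ α ∈ A, -⟪b ξ α, q - p⟫_ℝ - (σ ξ α * (σ ξ α)ᵀ * Z).trace ≤
      -η + (4 * B * M * L + Cb + 4 * B ^ 2 * M ^ 2) / N by
    have hF : Fop A b σ ξ (q - p) Z ≤ -η + (4 * B * M * L + Cb + 4 * B ^ 2 * M ^ 2) / N :=
      csSup_le (hA.image _) (Set.forall_mem_image.2 hneg)
    linarith [hvsuper ξ hξ _ hZ]
  intro α hα
  have hb : ‖b y α - b ξ α‖ ≤ B * (M / N) := (hbLip y hyV ξ hξV α hα).trans (by gcongr)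
  have hσ : mnorm (σ y α - σ ξ α) ≤ B * (M / N) := (hσLip y hyV ξ hξV α hα).trans (by gcongr)
  have hσ0 : 0 ≤ mnorm (σ y α - σ ξ α) := Real.sqrt_nonneg _
  calc -⟪b ξ α, q - p⟫_ℝ - (σ ξ α * (σ ξ α)ᵀ * Z).trace
      ≤ -⟪b y α, q⟫_ℝ - (σ y α * (σ y α)ᵀ * Q).trace + (‖b y α - b ξ α‖ * ‖q‖ +
          ‖b ξ α‖ * ‖p‖ + 4 * N * mnorm (σ y α - σ ξ α) ^ 2) :=
        neg_inner_sub_trace_le_add hZQ _ _ _ _ _ _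
    _ ≤ -η + (B * (M / N) * (4 * L) + Cb * (1 / N) + 4 * N * (B * (M / N)) ^ 2) := by
        gcongr
        · exact husub y hyV _ hQ α hα
        · exact (norm_nonneg _).trans (hCb ξ hξV α hα)
        · exact hCb ξ hξV α hα
    _ = -η + (4 * B * M * L + Cb + 4 * B ^ 2 * M ^ 2) / N := by
        field_simp

end Comparison

section UniformNeighborhood

variable {X : Type*} [PseudoMetricSpace X] {S : Set X} {P : X → ℝ → Prop}

theorem exists_forall_of_infDist_lt (hS : IsCompact S) (hne : S.Nonempty)
    (hP : ∀ x, Antitone (P x)) (h : ∀ z ∈ S, ∃ k > 0, ∀ᶠ x in nhds z, P x k) :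
    ∃ δ > 0, ∃ k > 0, ∀ x, Metric.infDist x S < δ → P x k := by
  obtain ⟨k, hk, hSk⟩ : ∃ k > 0, ∀ᶠ x in nhdsSet S, P x k := by
    refine hS.induction_on (p := fun T => ∃ k > 0, ∀ᶠ x in nhdsSet T, P x k) ?_ ?_ ?_ ?_
    · exact ⟨1, one_pos, by simp⟩
    · rintro T T' hTT' ⟨k, hk, hT'⟩
      exact ⟨k, hk, hT'.filter_mono (nhdsSet_mono hTT')⟩
    · rintro T T' ⟨k, hk, hT⟩ ⟨k', hk', hT'⟩
      refine ⟨min k k', lt_min hk hk', ?_⟩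
      rw [nhdsSet_union, eventually_sup]
      exact ⟨hT.mono fun x => hP x (min_le_left _ _), hT'.mono fun x => hP x (min_le_right _ _)⟩
    · intro z hz
      obtain ⟨k, hk, hzk⟩ := h z hz
      exact ⟨_, nhdsWithin_le_nhds hzk.eventually_nhds, k, hk,
        eventually_nhdsSet_iff_forall.2 fun _ hx => hx⟩
  obtain ⟨U, hU, hSU, hUk⟩ := eventually_nhdsSet_iff_exists.1 hSk
  obtain ⟨δ, hδ, hthick⟩ := hS.exists_thickening_subset_open hU hSU
  exact ⟨δ, hδ, k, hk, fun x hx =>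
    hUk x (hthick ((Metric.mem_thickening_iff_infDist_lt hne).2 hx))⟩

end UniformNeighborhood

section LogComparison

variable {X : Type*} {Ω : Set X} {d v : X → ℝ} {δ : ℝ}

/-- Comparison of `v` with the barriers `ε log d + const` on the annuli `{ρ ≤ d ≤ δ}` of `Ω`: an
inequality on the two level sets `{d = ρ}` and `{d = δ}` propagates to the region between them. -/
def HasLogComparison (Ω : Set X) (d v : X → ℝ) (δ : ℝ) : Prop :=
  ∀ ε > 0, ∀ ρ > 0, ∀ c, (∀ x ∈ Ω, d x = ρ ∨ d x = δ → ε * Real.log (d x) - v x ≤ c) →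
    ∀ x ∈ Ω, ρ ≤ d x → d x ≤ δ → ε * Real.log (d x) - v x ≤ c

theorem HasLogComparison.le_add_mul (hcomp : HasLogComparison Ω d v δ)
    (hgrowth : ∀ ε > 0, ∃ δ' > 0, ∀ x ∈ Ω, d x < δ' → ε * Real.log (d x) ≤ v x) {μ : ℝ}
    (hle : ∀ x ∈ Ω, d x = δ → μ ≤ v x) {x : X} (hx : x ∈ Ω) (hx0 : 0 < d x) (hxδ : d x ≤ δ)
    {ε : ℝ} (hε : 0 < ε) : μ ≤ v x + ε * (Real.log δ - Real.log (d x)) := by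
  obtain ⟨δ', hδ', hvlog⟩ := hgrowth (ε / 2) (half_pos hε)
  obtain ⟨ρ, hlogρ, ⟨hρδ', hρx⟩, hρ⟩ : ∃ ρ, ε / 2 * Real.log ρ < ε * Real.log δ - μ ∧
      (ρ < δ' ∧ ρ < d x) ∧ 0 < ρ :=
    (((Real.tendsto_log_nhdsGT_zero.const_mul_atBot (half_pos hε)).eventually_lt_atBot _).and
      ((eventually_nhdsWithin_of_eventually_nhds
        ((eventually_lt_nhds hδ').and (eventually_lt_nhds hx0))).and self_mem_nhdsWithin)).exists
  have hann := hcomp ε hε ρ hρ (ε * Real.log δ - μ) ?_ x hx hρx.le hxδ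
  · linarith
  rintro y hy (hyρ | hyδ)
  · have hvy := hvlog y hy (hyρ.trans_lt hρδ')
    rw [hyρ] at hvy ⊢
    linarith
  · rw [hyδ]
    linarith [hle y hy hyδ]

theorem HasLogComparison.le_of_le_level (hcomp : HasLogComparison Ω d v δ)
    (hgrowth : ∀ ε > 0, ∃ δ' > 0, ∀ x ∈ Ω, d x < δ' → ε * Real.log (d x) ≤ v x) {μ : ℝ}
    (hle : ∀ x ∈ Ω, d x = δ → μ ≤ v x) {x : X} (hx : x ∈ Ω) (hx0 : 0 < d x) (hxδ : d x ≤ δ) :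
    μ ≤ v x := by
  have hlim : Tendsto (fun ε => v x + ε * (Real.log δ - Real.log (d x)))
      (nhdsWithin 0 (Set.Ioi 0)) (nhds (v x)) :=
    tendsto_nhdsWithin_of_tendsto_nhds (Continuous.tendsto' (by fun_prop) _ _ (by simp))
  exact ge_of_tendsto hlim (eventually_mem_nhdsWithin.mono
    fun ε hε => hcomp.le_add_mul hgrowth hle hx hx0 hxδ hε)

end LogComparison

section MinimumPrinciple

variable {n m r : ℕ} {Ω : Set (EuclideanSpace ℝ (Fin n))} {A : Set (Fin m → ℝ)}
  {b : EuclideanSpace ℝ (Fin n) → (Fin m → ℝ) → EuclideanSpace ℝ (Fin n)}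
  {σ : EuclideanSpace ℝ (Fin n) → (Fin m → ℝ) → Matrix (Fin n) (Fin r) ℝ}
  {v : EuclideanSpace ℝ (Fin n) → ℝ} {B k δ : ℝ}

theorem hasLogComparison_bdist (hΩ : IsOpen Ω) (hΩbdd : Bornology.IsBounded Ω)
    (hne : (frontier Ω).Nonempty) (hA : A.Nonempty) (hB : 0 < B)
    (hbBdd : ∃ C, ∀ x ∈ closure Ω, ∀ α ∈ A, ‖b x α‖ ≤ C)
    (hbLip : ∀ x ∈ closure Ω, ∀ y ∈ closure Ω, ∀ α ∈ A, ‖b x α - b y α‖ ≤ B * ‖x - y‖)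
    (hσLip : ∀ x ∈ closure Ω, ∀ y ∈ closure Ω, ∀ α ∈ A, mnorm (σ x α - σ y α) ≤ B * ‖x - y‖)
    (hperp : ∀ α ∈ A, ∀ z ∈ frontier Ω, ∀ ν ∈ normalDirs Ω z, sigmaT (σ z α) ν = 0)
    (hsub : ∀ x ∈ Ω, bdist Ω x < 2 * δ → ∀ α ∈ A, ∀ pY ∈ J2plus (closure Ω) (bdist Ω) x,
      -⟪b x α, pY.1⟫_ℝ - (σ x α * (σ x α)ᵀ * pY.2).trace ≤ -k)
    (hδk : 2 * B ^ 2 * (2 * δ) ≤ k) (hv : LowerSemicontinuousOn v Ω)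
    (hvsuper : ∀ x ∈ Ω, ∀ qZ ∈ J2minus Ω v x, 0 ≤ Fop A b σ x qZ.1 qZ.2) :
    HasLogComparison Ω (bdist Ω) v δ := by
  intro ε hε ρ hρ c hle x hx hρx hxδ
  let K := closure Ω ∩ bdist Ω ⁻¹' Set.Icc ρ δ
  let O := Ω ∩ bdist Ω ⁻¹' Set.Ioo ρ δ
  let V := Ω ∩ bdist Ω ⁻¹' Set.Ioo (ρ / 2) (2 * δ)
  have hcont : Continuous (bdist Ω) := Metric.continuous_infDist_pt _
  have hVΩ : V ⊆ closure Ω := fun y hy => subset_closure hy.1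
  have hKΩ : K ⊆ Ω := fun y hy => mem_of_bdist_pos hy.1 (by linarith [hy.2.1])
  have hOV : Metric.thickening (ρ / 2) O ⊆ V :=
    (thickening_inter_preimage_bdist_subset hΩ (half_le_self hρ.le)).trans
      (Set.inter_subset_inter_right _ (Set.preimage_mono
        (Set.Ioo_subset_Ioo (by linarith) (by linarith))))
  have hOK : ∀ y ∈ O, K ∈ nhds y := fun y hy =>
    mem_of_superset ((hΩ.inter (isOpen_Ioo.preimage hcont)).mem_nhds hy)
      (Set.inter_subset_inter subset_closure (Set.preimage_mono Set.Ioo_subset_Icc_self))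
  have hlog : ∀ y ∈ K, ε * truncLogDist (ρ / 2) (frontier Ω) y = ε * Real.log (bdist Ω y) :=
    fun y hy => by
      rw [truncLogDist_of_le (half_pos hρ).le (by linarith [hy.2.1] : ρ / 2 ≤ bdist Ω y), bdist]
  have hxK : x ∈ K := ⟨subset_closure hx, hρx, hxδ⟩
  rw [← hlog x hxK]
  refine sub_le_of_strictSubsolution hA hB.le (half_pos hρ) (by positivity : 0 < ε * B ^ 2) hOV
    (hbBdd.imp fun C hC y hy => hC y (hVΩ hy))
    (fun y hy z hz => hbLip y (hVΩ hy) z (hVΩ hz))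
    (fun y hy z hz => hσLip y (hVΩ hy) z (hVΩ hz)) (by positivity)
    (semiconcaveWith_mul_truncLogDist isClosed_frontier hne (half_pos hρ) hε.le)
    (fun y hy qQ hqQ α hα => ?_) (hΩbdd.isCompact_closure.inter_right
      (isClosed_Icc.preimage hcont)) (hv.mono hKΩ)
    (fun y hy qZ hqZ => hvsuper y hy.1.1 qZ (J2plus_subset_of_mem_nhds (hOK y hy.1) hqZ))
    (fun y hy => ?_) x hxK
  · exact neg_inner_sub_trace_le_of_mem_J2plus (s := fun z => σ z α) hΩ hne hε (half_pos hρ) hy.1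
      hy.2.1
      (fun z hz => hσLip y (hVΩ hy) z (frontier_subset_closure hz) α hα) (hperp α hα)
      (hsub y hy.1 hy.2.2 α hα) ((by gcongr; exact hy.2.2.le : _ ≤ _).trans hδk) hqQ
  · rw [hlog y hy.1]
    have hyΩ := hKΩ hy.1
    refine hle y hyΩ ?_
    by_contra! hne
    exact hy.2 ⟨hyΩ, hy.1.2.1.lt_of_ne' hne.1, hy.1.2.2.lt_of_ne hne.2⟩

theorem exists_forall_hasLogComparison_bdist (hΩ : IsOpen Ω) (hΩbdd : Bornology.IsBounded Ω)
    (hne : (frontier Ω).Nonempty) (hA : A.Nonempty) (hB : 0 < B)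
    (hbBdd : ∃ C, ∀ x ∈ closure Ω, ∀ α ∈ A, ‖b x α‖ ≤ C)
    (hbLip : ∀ x ∈ closure Ω, ∀ y ∈ closure Ω, ∀ α ∈ A, ‖b x α - b y α‖ ≤ B * ‖x - y‖)
    (hσLip : ∀ x ∈ closure Ω, ∀ y ∈ closure Ω, ∀ α ∈ A, mnorm (σ x α - σ y α) ≤ B * ‖x - y‖)
    (hcond : ∀ z ∈ frontier Ω, ∃ U : Set (EuclideanSpace ℝ (Fin n)),
      IsOpen U ∧ z ∈ U ∧ ∃ k > (0 : ℝ), ∀ α ∈ A,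
        (∀ x ∈ Ω ∩ U, ∀ pY ∈ J2plus (closure Ω) (bdist Ω) x,
          -⟪b x α, pY.1⟫_ℝ - (σ x α * (σ x α)ᵀ * pY.2).trace ≤ -k) ∧
        (∀ w ∈ frontier Ω ∩ U, ∀ ν ∈ normalDirs Ω w, sigmaT (σ w α) ν = 0))
    (hv : LowerSemicontinuousOn v Ω)
    (hvsuper : ∀ x ∈ Ω, ∀ qZ ∈ J2minus Ω v x, 0 ≤ Fop A b σ x qZ.1 qZ.2) :
    ∃ δ₀ > 0, ∀ δ ≤ δ₀, HasLogComparison Ω (bdist Ω) v δ := by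
  have hcomp : IsCompact (frontier Ω) :=
    hΩbdd.isCompact_closure.of_isClosed_subset isClosed_frontier frontier_subset_closure
  have hperp : ∀ α ∈ A, ∀ z ∈ frontier Ω, ∀ ν ∈ normalDirs Ω z, sigmaT (σ z α) ν = 0 := by
    intro α hα z hz
    obtain ⟨U, -, hzU, k, -, hU⟩ := hcond z hz
    exact (hU α hα).2 z ⟨hz, hzU⟩
  obtain ⟨δ₁, hδ₁, k, hk, hsub⟩ := exists_forall_of_infDist_lt hcomp hne
    (P := fun x k => x ∈ Ω → ∀ α ∈ A, ∀ pY ∈ J2plus (closure Ω) (bdist Ω) x,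
      -⟪b x α, pY.1⟫_ℝ - (σ x α * (σ x α)ᵀ * pY.2).trace ≤ -k)
    (fun x k k' hkk' h hx α hα pY hpY => (h hx α hα pY hpY).trans (neg_le_neg hkk'))
    (fun z hz => by
      obtain ⟨U, hU, hzU, k, hk, hUk⟩ := hcond z hz
      exact ⟨k, hk, (hU.eventually_mem hzU).mono fun x hxU hx α hα => (hUk α hα).1 x ⟨hx, hxU⟩⟩)
  refine ⟨min (δ₁ / 2) (k / (4 * B ^ 2)), by positivity, fun δ hδ => ?_⟩
  have hδδ₁ : δ ≤ δ₁ / 2 := hδ.trans (min_le_left _ _)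
  have hδk : δ * (4 * B ^ 2) ≤ k := (le_div_iff₀ (by positivity)).1 (hδ.trans (min_le_right _ _))
  exact hasLogComparison_bdist hΩ hΩbdd hne hA hB hbBdd hbLip hσLip hperp
    (fun x hx hxδ => hsub x (hxδ.trans_le (by linarith)) hx) (by linarith) hv hvsuper

theorem exists_forall_le_of_hasLogComparison_bdist (hΩ : IsOpen Ω) (hΩbdd : Bornology.IsBounded Ω)
    (hne : (frontier Ω).Nonempty) (hv : LowerSemicontinuousOn v Ω)
    (hcomp : HasLogComparison Ω (bdist Ω) v δ) (hδ : 0 < δ) (hlevel : ∃ x ∈ Ω, δ ≤ bdist Ω x)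
    (hgrowth : ∀ ε > 0, ∃ δ' > 0, ∀ x ∈ Ω, bdist Ω x < δ' → ε * Real.log (bdist Ω x) ≤ v x) :
    ∃ x₀ ∈ Ω, ∀ x ∈ Ω, v x₀ ≤ v x := by
  let K := closure Ω ∩ bdist Ω ⁻¹' Set.Ici δ
  have hK : IsCompact K := hΩbdd.isCompact_closure.inter_right
    (isClosed_Ici.preimage (Metric.continuous_infDist_pt _))
  have hKΩ : K ⊆ Ω := fun x hx => mem_of_bdist_pos hx.1 (hδ.trans_le hx.2)
  have hKne : K.Nonempty := hlevel.imp fun x hx => ⟨subset_closure hx.1, hx.2⟩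
  obtain ⟨x₀, hx₀, hmin⟩ := (hv.mono hKΩ).exists_isMinOn hKne hK
  refine ⟨x₀, hKΩ hx₀, fun x hx => ?_⟩
  obtain hxδ | hxδ := le_total δ (bdist Ω x)
  · exact hmin ⟨subset_closure hx, hxδ⟩
  · exact hcomp.le_of_le_level hgrowth (fun y hy hyδ => hmin ⟨subset_closure hy, hyδ.ge⟩) hx
      (bdist_pos hΩ hne hx) hxδ

end MinimumPrinciple

theorem statement_10_general
    {n m r : ℕ} (Ω : Set (EuclideanSpace ℝ (Fin n)))
    (hΩo : IsOpen Ω) (hΩbdd : Bornology.IsBounded Ω)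
    (A : Set (Fin m → ℝ)) (hAne : A.Nonempty)
    (b : EuclideanSpace ℝ (Fin n) → (Fin m → ℝ) → EuclideanSpace ℝ (Fin n))
    (σ : EuclideanSpace ℝ (Fin n) → (Fin m → ℝ) → Matrix (Fin n) (Fin r) ℝ)
    (hbBdd : ∃ C, ∀ x ∈ closure Ω, ∀ α ∈ A, ‖b x α‖ ≤ C)
    (B : ℝ) (hB : 0 < B)
    (hbLip : ∀ x ∈ closure Ω, ∀ y ∈ closure Ω, ∀ α ∈ A, ‖b x α - b y α‖ ≤ B * ‖x - y‖)
    (hσLip : ∀ x ∈ closure Ω, ∀ y ∈ closure Ω, ∀ α ∈ A,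
      mnorm (σ x α - σ y α) ≤ B * ‖x - y‖)
    (hcond : ∀ z ∈ frontier Ω, ∃ U : Set (EuclideanSpace ℝ (Fin n)),
      IsOpen U ∧ z ∈ U ∧ ∃ k > (0 : ℝ), ∀ α ∈ A,
        (∀ x ∈ Ω ∩ U, ∀ pY ∈ J2plus (closure Ω) (bdist Ω) x,
          -⟪b x α, pY.1⟫_ℝ - Matrix.trace (σ x α * (σ x α)ᵀ * pY.2) ≤ -k) ∧
        (∀ w ∈ frontier Ω ∩ U, ∀ ν ∈ normalDirs Ω w, sigmaT (σ w α) ν = 0))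
    (hSMinP : ∀ w : EuclideanSpace ℝ (Fin n) → ℝ, LowerSemicontinuousOn w Ω →
      (∀ x ∈ Ω, ∀ qZ ∈ J2minus Ω w x, 0 ≤ Fop A b σ x qZ.1 qZ.2) →
      (∃ x₀ ∈ Ω, ∀ x ∈ Ω, w x₀ ≤ w x) → ∀ x ∈ Ω, ∀ y ∈ Ω, w x = w y)
    (v : EuclideanSpace ℝ (Fin n) → ℝ) (hv : LowerSemicontinuousOn v Ω)
    (hvsuper : ∀ x ∈ Ω, ∀ qZ ∈ J2minus Ω v x, 0 ≤ Fop A b σ x qZ.1 qZ.2)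
    (hgrowth : ∀ ε > (0 : ℝ), ∃ δ, 0 < δ ∧ δ < 1 ∧
      ∀ x ∈ Ω, bdist Ω x < δ → -(ε * (-Real.log (bdist Ω x))) ≤ v x) :
    ∀ x ∈ Ω, ∀ y ∈ Ω, v x = v y := by
  obtain rfl | hΩne := Ω.eq_empty_or_nonempty
  · simp
  refine hSMinP v hv hvsuper ?_
  obtain hempty | hne := (frontier Ω).eq_empty_or_nonempty
  · have hclosed : IsClosed Ω := (isClopen_iff_frontier_eq_empty.2 hempty).isClosed
    exact hv.exists_isMinOn hΩne (hclosed.closure_eq ▸ hΩbdd.isCompact_closure)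
  obtain ⟨δ₀, hδ₀, hcomp⟩ :=
    exists_forall_hasLogComparison_bdist hΩo hΩbdd hne hAne hB hbBdd hbLip hσLip hcond hv hvsuper
  obtain ⟨x, hx⟩ := hΩne
  refine exists_forall_le_of_hasLogComparison_bdist hΩo hΩbdd hne hv (hcomp _ (min_le_left _ _))
    (lt_min hδ₀ (bdist_pos hΩo hne hx)) ⟨x, hx, min_le_right _ _⟩ fun ε hε => ?_
  obtain ⟨δ', hδ', -, hvlog⟩ := hgrowth ε hε
  exact ⟨δ', hδ', fun y hy hyδ' => by simpa using hvlog y hy hyδ'⟩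

theorem statement_10
    {n m r : ℕ} (Ω : Set (EuclideanSpace ℝ (Fin n)))
    (hΩo : IsOpen Ω) (hΩconn : IsConnected Ω) (hΩbdd : Bornology.IsBounded Ω)
    (A : Set (Fin m → ℝ)) (hA : IsClosed A) (hAne : A.Nonempty)
    (b : EuclideanSpace ℝ (Fin n) → (Fin m → ℝ) → EuclideanSpace ℝ (Fin n))
    (σ : EuclideanSpace ℝ (Fin n) → (Fin m → ℝ) → Matrix (Fin n) (Fin r) ℝ)
    (hbBdd : ∃ C, ∀ x ∈ closure Ω, ∀ α ∈ A, ‖b x α‖ ≤ C)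
    (hσBdd : ∃ C, ∀ x ∈ closure Ω, ∀ α ∈ A, mnorm (σ x α) ≤ C)
    (hbCont : ContinuousOn (fun q : EuclideanSpace ℝ (Fin n) × (Fin m → ℝ) => b q.1 q.2)
      (closure Ω ×ˢ A))
    (hσCont : ContinuousOn (fun q : EuclideanSpace ℝ (Fin n) × (Fin m → ℝ) => σ q.1 q.2)
      (closure Ω ×ˢ A))
    (B : ℝ) (hB : 0 < B)
    (hbLip : ∀ x ∈ closure Ω, ∀ y ∈ closure Ω, ∀ α ∈ A, ‖b x α - b y α‖ ≤ B * ‖x - y‖)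
    (hσLip : ∀ x ∈ closure Ω, ∀ y ∈ closure Ω, ∀ α ∈ A,
      mnorm (σ x α - σ y α) ≤ B * ‖x - y‖)
    (hcond : ∀ z ∈ frontier Ω, ∃ U : Set (EuclideanSpace ℝ (Fin n)),
      IsOpen U ∧ z ∈ U ∧ ∃ k > (0 : ℝ), ∀ α ∈ A,
        (∀ x ∈ Ω ∩ U, ∀ pY ∈ J2plus (closure Ω) (bdist Ω) x,
          -⟪b x α, pY.1⟫_ℝ - Matrix.trace (σ x α * (σ x α)ᵀ * pY.2) ≤ -k) ∧
        (∀ w ∈ frontier Ω ∩ U, ∀ ν ∈ normalDirs Ω w, sigmaT (σ w α) ν = 0))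
    (hSMinP : ∀ w : EuclideanSpace ℝ (Fin n) → ℝ, LowerSemicontinuousOn w Ω →
      (∀ x ∈ Ω, ∀ qZ ∈ J2minus Ω w x, 0 ≤ Fop A b σ x qZ.1 qZ.2) →
      (∃ x₀ ∈ Ω, ∀ x ∈ Ω, w x₀ ≤ w x) → ∀ x ∈ Ω, ∀ y ∈ Ω, w x = w y)
    (v : EuclideanSpace ℝ (Fin n) → ℝ) (hv : LowerSemicontinuousOn v Ω)
    (hvsuper : ∀ x ∈ Ω, ∀ qZ ∈ J2minus Ω v x, 0 ≤ Fop A b σ x qZ.1 qZ.2)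
    (hgrowth : ∀ ε > (0 : ℝ), ∃ δ, 0 < δ ∧ δ < 1 ∧
      ∀ x ∈ Ω, bdist Ω x < δ → -(ε * (-Real.log (bdist Ω x))) ≤ v x) :
    ∀ x ∈ Ω, ∀ y ∈ Ω, v x = v y := by
  exact statement_10_general Ω hΩo hΩbdd A hAne b σ hbBdd B hB hbLip hσLip hcond hSMinP v hv
    hvsuper hgrowth
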